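/- Assume the Extended Riemann Hypothesis. Then there exists an absolute constant C such that for all real n ≥ 2, all integers D with 1 ≤ D < n, and all integers a with gcd(a, D) = 1: |π(n, D, a) − li(n)/φ(D)| ≤ C·√n·log n, where π(n, D, a) denotes the number of primes p ≤ n with p ≡ a (mod D), li(n) = ∫_2^n dt/log t, and φ is Euler's totient function. -/

import Mathlib

/-- The Extended Riemann Hypothesis: every zero of every Dirichlet `L`-function
in the critical strip lies on the critical line. -/
def ExtendedRiemannHypothesis : Prop :=
  ∀ (N : ℕ) [NeZero N] (χ : DirichletCharacter ℂ N) (s : ℂ),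
    0 < s.re → s.re < 1 → DirichletCharacter.LFunction χ s = 0 → s.re = 1 / 2

/-- `π(n, D, a)`: the number of primes `p ≤ n` with `p ≡ a (mod D)`. -/
noncomputable def primesCountMod (n : ℝ) (D a : ℕ) : ℕ :=
  {p : ℕ | p.Prime ∧ (p : ℝ) ≤ n ∧ p % D = a % D}.ncard

/-- The logarithmic integral `li(n) = ∫_2^n dt / log t`. -/
noncomputable def li (n : ℝ) : ℝ := ∫ t in (2 : ℝ)..n, 1 / Real.log t

section LogDerivBound

open Complex Metric ComplexConjugate

/-- A holomorphic function without zeros in the disc of radius `17/10` has a logarithmic derivative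
in the disc of radius `8/5` that is controlled by its growth. -/
lemma norm_logDeriv_le_of_ne_zero {g : ℂ → ℂ} (hg : Differentiable ℂ g) {M : ℝ} (hM : 0 < M)
    (h0 : ∀ z ∈ ball (0 : ℂ) (17 / 10), g z ≠ 0)
    (hb : ∀ z ∈ ball (0 : ℂ) (17 / 10), ‖g z‖ ≤ ‖g 0‖ * Real.exp M) {z : ℂ} (hz : ‖z‖ ≤ 8 / 5) :
    ‖logDeriv g z‖ ≤ 1320 * M := by
  have hg0 : g 0 ≠ 0 := h0 0 (by simp)
  have hd : DifferentiableOn ℂ (logDeriv g) (ball 0 (17 / 10)) := by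
    unfold logDeriv
    exact (hg.deriv).differentiableOn.div hg.differentiableOn h0
  obtain ⟨h, hh0, hh⟩ := hd.isExactOn_ball.with_val_at 0 0
  have hexp : ∀ w ∈ ball (0 : ℂ) (17 / 10), g w = g 0 * exp (h w) := by
    have key : ∀ w ∈ ball (0 : ℂ) (17 / 10), HasDerivAt (fun w => g w * exp (-h w)) 0 w := by
      intro w hw
      have h1 := (hg w).hasDerivAt.mul ((hh w hw).neg.cexp)
      refine h1.congr_deriv ?_
      have := h0 w hw
      rw [logDeriv_apply]
      field_simp
      ring
    intro w hw
    have := (convex_ball (0 : ℂ) (17 / 10)).is_const_of_fderivWithin_eq_zero (𝕜 := ℂ)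
      (f := fun w => g w * exp (-h w))
      (fun w hw => (key w hw).differentiableAt.differentiableWithinAt)
      (fun w hw => by
        rw [fderivWithin_of_isOpen isOpen_ball hw]
        ext
        simpa using (key w hw).deriv) hw (show (0 : ℂ) ∈ ball (0 : ℂ) (17 / 10) by simp)
    simp only [hh0, neg_zero, exp_zero, mul_one] at this
    rw [← this, mul_assoc, ← exp_add]
    simp
  have hdh : DifferentiableOn ℂ h (ball 0 (17 / 10)) := fun w hw =>
    (hh w hw).differentiableAt.differentiableWithinAt
  have hre : Set.MapsTo h (ball 0 (17 / 10)) {z | z.re ≤ M} := by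
    intro w hw
    have h1 := hb w hw
    rw [hexp w hw, norm_mul, norm_exp] at h1
    exact Real.exp_le_exp.mp (le_of_mul_le_mul_left h1 (norm_pos_iff.mpr hg0))
  have hbound : ∀ w ∈ closedBall (0 : ℂ) (33 / 20), ‖h w‖ ≤ 66 * M := by
    intro w hw
    have hw' : ‖w‖ ≤ 33 / 20 := by simpa using hw
    have := borelCaratheodory_zero hM hdh hre (by norm_num) (z := w)
      (by simp; linarith) hh0
    refine this.trans ?_
    rw [div_le_iff₀ (by linarith)]
    nlinarith
  have hzb : z ∈ ball (0 : ℂ) (17 / 10) := by simp; linarith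
  rw [← (hh z hzb).deriv]
  have hsub : closedBall z (1 / 20) ⊆ closedBall (0 : ℂ) (33 / 20) := by
    apply closedBall_subset_closedBall'
    simp; linarith
  have hsub' : closedBall (0 : ℂ) (33 / 20) ⊆ ball 0 (17 / 10) :=
    closedBall_subset_ball (by norm_num)
  have := norm_deriv_le_of_forall_mem_sphere_norm_le (c := z) (R := 1 / 20) (C := 66 * M) (f := h)
    (by norm_num)
    ((hdh.mono ((closure_ball_subset_closedBall).trans (hsub.trans hsub'))).diffContOnCl)
    (fun w hw => hbound w (hsub (sphere_subset_closedBall hw)))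
  linarith

/-- The zeros of an entire function in a disc can be divided out by Blaschke factors without
increasing its maximum on a slightly larger disc. -/
lemma exists_logDeriv_eq_add_sum (N : ℕ) : ∀ f : ℂ → ℂ, Differentiable ℂ f → ∀ A : ℝ,
    (∀ z ∈ closedBall (0 : ℂ) (7 / 4), ‖f z‖ ≤ A) → A < ‖f 0‖ * (35 / 34) ^ N →
    ∃ n ≤ N, ∃ ρ : Fin n → ℂ, (∀ i, ‖ρ i‖ ≤ 17 / 10 ∧ f (ρ i) = 0) ∧
    ∃ g : ℂ → ℂ, Differentiable ℂ g ∧ (∀ z ∈ closedBall (0 : ℂ) (17 / 10), g z ≠ 0) ∧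
      (∀ z ∈ closedBall (0 : ℂ) (7 / 4), ‖g z‖ ≤ A) ∧ ‖f 0‖ ≤ ‖g 0‖ ∧
      ∀ z ∈ closedBall (0 : ℂ) (17 / 10), f z ≠ 0 → logDeriv f z = logDeriv g z +
        ∑ i, (1 / (z - ρ i) + conj (ρ i) / ((7 / 4) ^ 2 - conj (ρ i) * z)) := by
  induction N with
  | zero =>
    intro f _ A hA hlt
    have := hA 0 (by simp; norm_num)
    simp at hlt
    linarith
  | succ N ih =>
    intro f hf A hA hlt
    by_cases hz : ∃ ρ ∈ closedBall (0 : ℂ) (17 / 10), f ρ = 0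
    swap
    · push Not at hz
      exact ⟨0, by simp, fun i => i.elim0, fun i => i.elim0, f, hf, hz, hA, le_rfl, by simp⟩
    obtain ⟨ρ, hρ, hfρ⟩ := hz
    have hρ' : ‖ρ‖ ≤ 17 / 10 := by simpa using hρ
    set d := dslope f ρ with hd_def
    have hd : Differentiable ℂ d := by
      rw [← differentiableOn_univ] at hf ⊢
      exact (differentiableOn_dslope Filter.univ_mem).mpr hf
    have hfd : ∀ z, f z = (z - ρ) * d z := fun z => by
      have := sub_smul_dslope f ρ z
      rw [hfρ, sub_zero, smul_eq_mul] at this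
      exact this.symm
    set f₁ : ℂ → ℂ := fun z => d z * (((7 / 4) ^ 2 - conj ρ * z) / (7 / 4)) with hf₁
    have hf₁d : Differentiable ℂ f₁ := by fun_prop
    have hden : ∀ z : ℂ, ‖z‖ ≤ 7 / 4 → ((7 / 4) ^ 2 - conj ρ * z : ℂ) ≠ 0 := by
      intro z hz h
      have h1 : ‖((7 / 4) ^ 2 : ℂ)‖ = ‖conj ρ * z‖ := by rw [sub_eq_zero.mp h]
      rw [norm_mul, norm_pow, RCLike.norm_conj] at h1
      norm_num at h1
      nlinarith [norm_nonneg ρ, norm_nonneg z]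
    have hsph : ∀ z ∈ sphere (0 : ℂ) (7 / 4), ‖f₁ z‖ ≤ A := by
      intro z hz
      have hz' : ‖z‖ = 7 / 4 := by simpa using hz
      have hzz : ((7 / 4) ^ 2 : ℂ) = z * conj z := by
        rw [mul_conj, normSq_eq_norm_sq, hz']; norm_num
      have : f₁ z = d z * (conj (z - ρ) * (z / (7 / 4))) := by
        simp only [hf₁, hzz, map_sub]; ring
      have h2 : ‖f₁ z‖ = ‖f z‖ := by
        rw [this, hfd]
        simp only [norm_mul, RCLike.norm_conj, norm_div, hz']
        norm_num
        ring
      rw [h2]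
      exact hA z (sphere_subset_closedBall hz)
    have hA₁ : ∀ z ∈ closedBall (0 : ℂ) (7 / 4), ‖f₁ z‖ ≤ A := by
      intro z hz
      refine norm_le_of_forall_mem_frontier_norm_le (U := ball (0 : ℂ) (7 / 4)) isBounded_ball
        hf₁d.diffContOnCl ?_ ?_
      · intro w hw
        rw [frontier_ball _ (by norm_num)] at hw
        exact hsph w hw
      · rwa [closure_ball _ (by norm_num)]
    have hf0 : f 0 ≠ 0 := by
      intro h
      have := hA 0 (by simp; norm_num)
      rw [h] at hlt this
      simp at hlt this
      linarith
    have hρ0 : 0 < ‖ρ‖ := by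
      rw [norm_pos_iff]; rintro rfl; exact hf0 hfρ
    have h10 : ‖f 0‖ * (35 / 34) ≤ ‖f₁ 0‖ := by
      simp only [hf₁, hfd 0, zero_sub, norm_mul, norm_neg, mul_zero, sub_zero]
      norm_num
      nlinarith [norm_nonneg (d 0)]
    obtain ⟨n, hn, r, hr, g, hg, hg0, hgA, hgf, hlog⟩ := ih f₁ hf₁d A hA₁ (by
      refine hlt.trans_le ?_
      rw [pow_succ', ← mul_assoc]
      gcongr)
    refine ⟨n + 1, by omega, Fin.cons ρ r, ?_, g, hg, hg0, hgA, ?_, ?_⟩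
    · intro i
      refine Fin.cases ⟨by simpa using hρ', by simpa using hfρ⟩ (fun i => ?_) i
      simp only [Fin.cons_succ]
      refine ⟨(hr i).1, ?_⟩
      have h1 := (hr i).2
      simp only [hf₁, mul_eq_zero] at h1
      have h2 := hden (r i) (by linarith [(hr i).1])
      rcases h1 with h1 | h1
      · rw [hfd, h1, mul_zero]
      · exact absurd h1 (div_ne_zero h2 (by norm_num))
    · nlinarith [norm_nonneg (f 0)]
    · intro z hz hfz
      have hz' : ‖z‖ ≤ 7 / 4 := by
        have : ‖z‖ ≤ 17 / 10 := by simpa using hz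
        linarith
      have hzρ : z - ρ ≠ 0 := fun h => hfz (by rw [hfd, h, zero_mul])
      have hdz : d z ≠ 0 := fun h => hfz (by rw [hfd, h, mul_zero])
      have e1 : logDeriv f z = 1 / (z - ρ) + logDeriv d z := by
        have : f = fun z => (z - ρ) * d z := funext hfd
        rw [this, logDeriv_mul z hzρ hdz (by fun_prop) (hd z)]
        simp [logDeriv_apply]
      have e2 : logDeriv f₁ z = logDeriv d z - conj ρ / ((7 / 4) ^ 2 - conj ρ * z) := by
        rw [hf₁, logDeriv_mul (g := fun z => ((7 / 4) ^ 2 - conj ρ * z) / (7 / 4)) z hdz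
          (div_ne_zero (hden z hz') (by norm_num)) (hd z) (by fun_prop)]
        rw [sub_eq_add_neg]
        congr 1
        have hD : HasDerivAt (fun z => (((7 / 4) ^ 2 - conj ρ * z) / (7 / 4) : ℂ))
            ((0 - conj ρ * 1) / (7 / 4)) z :=
          (((hasDerivAt_const z _).sub ((hasDerivAt_id z).const_mul _)).div_const _)
        rw [logDeriv_apply, hD.deriv]
        have := hden z hz'
        field_simp
        ring
      have hf₁z : f₁ z ≠ 0 := mul_ne_zero hdz (div_ne_zero (hden z hz') (by norm_num))
      have e3 := hlog z hz hf₁z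
      rw [Fin.sum_univ_succ]
      simp only [Fin.cons_zero, Fin.cons_succ]
      rw [e1, ← sub_eq_zero]
      rw [e2, sub_eq_iff_eq_add] at e3
      rw [e3]
      ring

/-- Local partial fraction expansion of the logarithmic derivative of an entire function. -/
lemma exists_norm_logDeriv_sub_sum_le {f : ℂ → ℂ} (hf : Differentiable ℂ f) (c : ℂ) {M : ℝ}
    (hM : 1 ≤ M) (hc : f c ≠ 0) (hb : ∀ z, ‖z - c‖ ≤ 7 / 4 → ‖f z‖ ≤ ‖f c‖ * Real.exp M) :
    ∃ n : ℕ, (n : ℝ) ≤ 36 * M ∧ ∃ ρ : Fin n → ℂ, (∀ i, ‖ρ i - c‖ ≤ 17 / 10 ∧ f (ρ i) = 0) ∧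
      ∀ z, ‖z - c‖ ≤ 8 / 5 → f z ≠ 0 → ‖logDeriv f z - ∑ i, 1 / (z - ρ i)‖ ≤ 1500 * M := by
  set F : ℂ → ℂ := fun z => f (c + z) with hF
  have hFd : Differentiable ℂ F := by fun_prop
  have hF0 : F 0 = f c := by simp [hF]
  have hpow : Real.exp M < (35 / 34) ^ (⌊35 * M⌋₊ + 1) := by
    have h1 : Real.exp (1 / 35) ≤ 35 / 34 := by
      rw [← Real.le_log_iff_exp_le (by norm_num)]
      have := Real.one_sub_inv_le_log_of_pos (show (0 : ℝ) < 35 / 34 by norm_num)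
      norm_num at this ⊢
      linarith
    calc Real.exp M < Real.exp ((⌊35 * M⌋₊ + 1 : ℕ) * (1 / 35)) := by
          apply Real.exp_lt_exp.mpr
          have := Nat.lt_floor_add_one (35 * M)
          push_cast
          linarith
      _ = Real.exp (1 / 35) ^ (⌊35 * M⌋₊ + 1) := Real.exp_nat_mul _ _
      _ ≤ _ := by gcongr
  obtain ⟨n, hn, r, hr, g, hg, hg0, hgA, hgf, hlog⟩ :=
    exists_logDeriv_eq_add_sum (⌊35 * M⌋₊ + 1) F hFd (‖f c‖ * Real.exp M)
      (fun z hz => hb _ (by simpa using hz))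
      (by rw [hF0]; exact mul_lt_mul_of_pos_left hpow (norm_pos_iff.mpr hc))
  have hnM : (n : ℝ) ≤ 36 * M := by
    have h1 : (n : ℝ) ≤ ⌊35 * M⌋₊ + 1 := by exact_mod_cast hn
    have h2 := Nat.floor_le (show 0 ≤ 35 * M by linarith)
    linarith
  refine ⟨n, hnM, fun i => c + r i, ?_, ?_⟩
  · intro i
    exact ⟨by simpa using (hr i).1, (hr i).2⟩
  · intro z hz hfz
    have hzc : F (z - c) = f z := by simp [hF]
    have e := hlog (z - c) (by simp; linarith) (by rwa [hzc])
    have e' : logDeriv F (z - c) = logDeriv f z := by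
      simp only [logDeriv_apply, hzc]
      congr 1
      rw [hF, deriv_comp_const_add]
      simp
    rw [e', Finset.sum_add_distrib] at e
    have e2 : logDeriv f z - ∑ i, 1 / (z - (c + r i)) = logDeriv g (z - c) +
        ∑ i, conj (r i) / ((7 / 4) ^ 2 - conj (r i) * (z - c)) := by
      rw [e]
      simp only [sub_sub]
      ring
    rw [e2]
    have hg1 : ‖logDeriv g (z - c)‖ ≤ 1320 * M := by
      refine norm_logDeriv_le_of_ne_zero hg (by linarith)
        (fun w hw => hg0 w (ball_subset_closedBall hw)) (fun w hw => ?_) hz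
      refine (hgA w ?_).trans ?_
      · exact closedBall_subset_closedBall (by norm_num) (ball_subset_closedBall hw)
      · rw [hF0] at hgf
        gcongr
    have hg2 : ‖∑ i, conj (r i) / ((7 / 4) ^ 2 - conj (r i) * (z - c))‖ ≤ n * 5 := by
      refine (norm_sum_le _ _).trans ?_
      have : ∀ i ∈ Finset.univ, ‖conj (r i) / ((7 / 4) ^ 2 - conj (r i) * (z - c))‖ ≤ 5 := by
        intro i _
        have h1 := (hr i).1
        have h2 : (49 / 16 : ℝ) - 17 / 10 * (8 / 5) ≤
            ‖((7 / 4) ^ 2 - conj (r i) * (z - c) : ℂ)‖ := by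
          have h3 := norm_sub_norm_le ((7 / 4) ^ 2 : ℂ) (conj (r i) * (z - c))
          rw [norm_mul, RCLike.norm_conj, norm_pow] at h3
          norm_num at h3 ⊢
          have h4 : ‖r i‖ * ‖z - c‖ ≤ 17 / 10 * (8 / 5) := by gcongr
          linarith
        rw [norm_div, RCLike.norm_conj, div_le_iff₀ (by linarith)]
        linarith
      refine (Finset.sum_le_sum this).trans ?_
      simp
    refine (norm_add_le _ _).trans ?_
    linarith

end LogDerivBound

section PartialSums

open Complex MeasureTheory Set Filter Topology
variable {q : ℕ} [NeZero q]

/-- The mean value of a Dirichlet character over a full period. -/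
noncomputable def charMean (χ : DirichletCharacter ℂ q) : ℂ := (∑ a, χ a) / q

lemma charMean_of_ne_one {χ : DirichletCharacter ℂ q} (hχ : χ ≠ 1) : charMean χ = 0 := by
  rw [charMean, χ.sum_eq_zero_of_ne_one hχ, zero_div]

lemma norm_charMean_le (χ : DirichletCharacter ℂ q) : ‖charMean χ‖ ≤ 1 := by
  have hq : (0 : ℝ) < q := by exact_mod_cast Nat.pos_of_ne_zero (NeZero.ne q)
  rw [charMean, norm_div, Complex.norm_natCast, div_le_one hq]
  refine (norm_sum_le _ _).trans ((Finset.sum_le_sum fun a _ => χ.norm_le_one a).trans ?_)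
  simp [ZMod.card]

lemma sum_range_char_eq (χ : DirichletCharacter ℂ q) :
    ∑ k ∈ Finset.range q, χ ((k + 1 : ℕ) : ZMod q) = q * charMean χ := by
  have hq : (q : ℂ) ≠ 0 := by exact_mod_cast NeZero.ne q
  rw [charMean, mul_div_cancel₀ _ hq, ← Equiv.sum_comp (Equiv.addRight (1 : ZMod q))]
  obtain ⟨q, rfl⟩ := Nat.exists_eq_succ_of_ne_zero (NeZero.ne q)
  rw [Finset.sum_range]
  refine Finset.sum_congr rfl fun i _ => ?_
  have : (((i : ℕ)) : ZMod (q + 1)) = i := Fin.cast_val_eq_self i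
  simp only [Nat.cast_add, Nat.cast_one, Equiv.coe_addRight]
  exact congrArg (fun z : ZMod (q+1) => χ (z + 1)) this

lemma norm_sum_range_char_sub_le (χ : DirichletCharacter ℂ q) (n : ℕ) :
    ‖∑ k ∈ Finset.range n, χ ((k + 1 : ℕ) : ZMod q) - n * charMean χ‖ ≤ 2 * q := by
  induction n using Nat.strong_induction_on with
  | _ n ih =>
    rcases lt_or_ge n q with h | h
    · refine (norm_sub_le _ _).trans ?_
      have h1 : ‖∑ k ∈ Finset.range n, χ ((k + 1 : ℕ) : ZMod q)‖ ≤ n := by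
        refine (norm_sum_le _ _).trans ((Finset.sum_le_sum fun a _ => χ.norm_le_one _).trans ?_)
        simp
      have h2 : ‖(n : ℂ) * charMean χ‖ ≤ n := by
        rw [norm_mul, Complex.norm_natCast]
        exact mul_le_of_le_one_right (by positivity) (norm_charMean_le χ)
      have : (n : ℝ) ≤ q := by exact_mod_cast h.le
      linarith
    · obtain ⟨r, rfl⟩ := Nat.exists_eq_add_of_le h
      have := ih r (by have := Nat.pos_of_ne_zero (NeZero.ne q); omega)
      rw [Finset.sum_range_add, sum_range_char_eq]
      convert this using 2
      push_cast
      simp only [CharP.cast_eq_zero, zero_add]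
      ring

lemma norm_sum_Icc_char_sub_le (χ : DirichletCharacter ℂ q) {u : ℝ} (hu : 0 ≤ u) :
    ‖∑ k ∈ Finset.Icc 1 ⌊u⌋₊, χ (k : ZMod q) - u * charMean χ‖ ≤ 3 * q := by
  have h1 : ∑ k ∈ Finset.Icc 1 ⌊u⌋₊, χ (k : ZMod q)
      = ∑ k ∈ Finset.range ⌊u⌋₊, χ ((k + 1 : ℕ) : ZMod q) := by
    rw [Finset.range_eq_Ico, Finset.sum_Ico_add' (fun k : ℕ => χ (k : ZMod q)) 0 _ 1]
    rfl
  have h2 : (1 : ℝ) ≤ q := by exact_mod_cast Nat.one_le_iff_ne_zero.mpr (NeZero.ne q)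
  have h3 : ‖((⌊u⌋₊ : ℂ) - u) * charMean χ‖ ≤ 1 := by
    rw [norm_mul]
    refine mul_le_one₀ ?_ (norm_nonneg _) (norm_charMean_le χ)
    have : ((⌊u⌋₊ : ℂ) - u) = ((⌊u⌋₊ - u : ℝ) : ℂ) := by push_cast; rfl
    rw [this, Complex.norm_real, Real.norm_eq_abs, abs_le]
    constructor <;> linarith [Nat.floor_le hu, Nat.lt_floor_add_one u]
  rw [h1]
  calc _ = ‖(∑ k ∈ Finset.range ⌊u⌋₊, χ ((k + 1 : ℕ) : ZMod q) - ⌊u⌋₊ * charMean χ) +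
        ((⌊u⌋₊ : ℂ) - u) * charMean χ‖ := by congr 1; ring
    _ ≤ 2 * q + 1 := (norm_add_le _ _).trans (add_le_add (norm_sum_range_char_sub_le χ _) h3)
    _ ≤ _ := by linarith

end PartialSums

section Tail

open Complex MeasureTheory Set Filter Topology

lemma integrableOn_Ioi_mul_cpow {R : ℝ → ℂ} (hR : Measurable R) {B : ℝ}
    (hB : ∀ u, 1 < u → ‖R u‖ ≤ B) {s : ℂ} (hs : 0 < s.re) :
    IntegrableOn (fun u : ℝ => R u * (u : ℂ) ^ (-(s + 1))) (Ioi 1) := by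
  have h1 : IntegrableOn (fun u : ℝ => (u : ℂ) ^ (-(s + 1))) (Ioi 1) :=
    integrableOn_Ioi_cpow_of_lt (by simp; linarith) zero_lt_one
  refine h1.bdd_mul (c := B) hR.aestronglyMeasurable ?_
  exact (ae_restrict_iff' measurableSet_Ioi).mpr (ae_of_all _ fun u hu => hB u hu)

lemma norm_integral_Ioi_mul_cpow_le {R : ℝ → ℂ} {B : ℝ}
    (hB : ∀ u, 1 < u → ‖R u‖ ≤ B) {s : ℂ} (hs : 0 < s.re) :
    ‖∫ u in Ioi (1 : ℝ), R u * (u : ℂ) ^ (-(s + 1))‖ ≤ B / s.re := by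
  have h1 : IntegrableOn (fun u : ℝ => B * u ^ (-(s.re + 1))) (Ioi 1) :=
    (integrableOn_Ioi_rpow_of_lt (by linarith) zero_lt_one).const_mul _
  have h2 := norm_integral_le_of_norm_le (f := fun u : ℝ => R u * (u : ℂ) ^ (-(s + 1))) h1
    ((ae_restrict_iff' measurableSet_Ioi).mpr (ae_of_all _ fun u (hu : 1 < u) => by
      rw [norm_mul, Complex.norm_cpow_eq_rpow_re_of_pos (by linarith)]
      simp only [neg_re, add_re, one_re]
      gcongr
      exact hB u hu))
  refine h2.trans_eq ?_
  rw [integral_const_mul, integral_Ioi_rpow_of_lt (by linarith) zero_lt_one]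
  simp
  field_simp

lemma differentiableAt_integral_Ioi_mul_cpow {R : ℝ → ℂ} (hR : Measurable R) {B : ℝ}
    (hB : ∀ u, 1 < u → ‖R u‖ ≤ B) {s : ℂ} (hs : 0 < s.re) :
    DifferentiableAt ℂ (fun s : ℂ => ∫ u in Ioi (1 : ℝ), R u * (u : ℂ) ^ (-(s + 1))) s := by
  set f : ℝ → ℂ := (Ioi (1 : ℝ)).indicator R with hf
  have hB0 : 0 ≤ B := (norm_nonneg _).trans (hB 2 (by norm_num))
  have hfB : ∀ u, ‖f u‖ ≤ B := by
    intro u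
    by_cases hu : 1 < u
    · rw [hf, indicator_of_mem (by exact hu)]; exact hB u hu
    · rw [hf, indicator_of_notMem (by exact hu)]; simpa using hB0
  have hfm : Measurable f := hR.indicator measurableSet_Ioi
  have hloc : LocallyIntegrable f := by
    refine LocallyIntegrable.mono (g := f) (f := fun _ : ℝ => B) (locallyIntegrable_const B)
      hfm.aestronglyMeasurable (ae_of_all _ fun u => ?_)
    rw [Real.norm_of_nonneg hB0]; exact hfB u
  have key : DifferentiableAt ℂ (mellin f) (-s) := by
    refine mellin_differentiableAt_of_isBigO_rpow (a := 0) (b := (-s).re - 1)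
      (hloc.locallyIntegrableOn _) ?_ (by simpa using hs) ?_ (by linarith)
    · simp only [neg_zero, Real.rpow_zero]
      exact Asymptotics.isBigO_of_le' (c := B) _ fun u => by simpa using hfB u
    · refine Asymptotics.IsBigO.of_bound 1 ?_
      filter_upwards [Ioo_mem_nhdsGT (zero_lt_one (α := ℝ))] with u hu
      rw [hf, indicator_of_notMem (by simpa using hu.2.le)]
      simp only [norm_zero]; positivity
  have h2 : (fun s : ℂ => ∫ u in Ioi (1 : ℝ), R u * (u : ℂ) ^ (-(s + 1)))
      = fun s => mellin f (-s) := by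
    ext s
    rw [mellin, hf]
    have : ∀ u : ℝ, (u : ℂ) ^ (-s - 1) • (Ioi (1 : ℝ)).indicator R u
        = (Ioi (1 : ℝ)).indicator (fun u => R u * (u : ℂ) ^ (-(s + 1))) u := by
      intro u
      by_cases hu : u ∈ Ioi (1 : ℝ)
      · rw [indicator_of_mem hu, indicator_of_mem hu, smul_eq_mul, mul_comm]; congr 2; ring
      · rw [indicator_of_notMem hu, indicator_of_notMem hu, smul_zero]
    simp_rw [this]
    rw [setIntegral_indicator measurableSet_Ioi]
    congr 2
    ext u; simp
  rw [h2]
  exact key.comp s differentiableAt_id.neg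

end Tail

section RegularizedLFunction

open Complex MeasureTheory Set Filter Topology
open scoped ArithmeticFunction.vonMangoldt
variable {q : ℕ} [NeZero q]

open Classical in
/-- The `L`-function of a Dirichlet character, multiplied by `s - 1` when the character is trivial;
an entire function. -/
noncomputable def regL (χ : DirichletCharacter ℂ q) : ℂ → ℂ :=
  if χ = 1 then DirichletCharacter.LFunctionTrivChar₁ q else χ.LFunction

open Classical in
/-- The order of the pole at `1` of the `L`-function of a Dirichlet character. -/
noncomputable def poleOrder (χ : DirichletCharacter ℂ q) : ℝ := if χ = 1 then 1 else 0

lemma regL_of_ne_one {χ : DirichletCharacter ℂ q} (hχ : χ ≠ 1) : regL χ = χ.LFunction := by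
  rw [regL, if_neg hχ]

lemma regL_one : regL (1 : DirichletCharacter ℂ q) = DirichletCharacter.LFunctionTrivChar₁ q := by
  rw [regL, if_pos rfl]

lemma regL_one_apply {s : ℂ} (hs : s ≠ 1) :
    regL (1 : DirichletCharacter ℂ q) s
      = (s - 1) * (1 : DirichletCharacter ℂ q).LFunction s := by
  rw [regL_one, DirichletCharacter.LFunctionTrivChar₁, Function.update_of_ne hs]

lemma differentiable_regL (χ : DirichletCharacter ℂ q) : Differentiable ℂ (regL χ) := by
  by_cases hχ : χ = 1
  · rw [hχ, regL_one]; exact DirichletCharacter.differentiable_LFunctionTrivChar₁ q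
  · rw [regL_of_ne_one hχ]; exact DirichletCharacter.differentiable_LFunction hχ

lemma regL_ne_zero_of_one_le_re (χ : DirichletCharacter ℂ q) {s : ℂ} (hs : 1 ≤ s.re) :
    regL χ s ≠ 0 := by
  by_cases hχ : χ = 1
  · subst hχ
    by_cases h1 : s = 1
    · rw [h1, regL_one]; exact DirichletCharacter.LFunctionTrivChar₁_apply_one_ne_zero q
    · rw [regL_one_apply h1]
      exact mul_ne_zero (sub_ne_zero.mpr h1)
        (DirichletCharacter.LFunction_ne_zero_of_one_le_re _ (.inr h1) hs)
  · rw [regL_of_ne_one hχ]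
    exact DirichletCharacter.LFunction_ne_zero_of_one_le_re _ (.inl hχ) hs

lemma LFunction_eq_charMean_add_integral (χ : DirichletCharacter ℂ q) {s : ℂ} (hs : 1 < s.re) :
    χ.LFunction s = charMean χ * s / (s - 1) + s * ∫ u in Ioi (1 : ℝ),
      (∑ k ∈ Finset.Icc 1 ⌊u⌋₊, χ (k : ZMod q) - u * charMean χ) * (u : ℂ) ^ (-(s + 1)) := by
  have hO : (fun n : ℕ ↦ ∑ k ∈ Finset.Icc 1 n, ‖χ (k : ZMod q)‖) =O[atTop]
      fun n ↦ (n : ℝ) ^ (1 : ℝ) := by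
    refine Asymptotics.isBigO_of_le _ fun n => ?_
    rw [Real.norm_of_nonneg (by positivity), Real.rpow_one, Real.norm_of_nonneg (by positivity)]
    exact (Finset.sum_le_sum fun a _ => χ.norm_le_one _).trans (by simp)
  have hR : Measurable fun u : ℝ =>
      (∑ k ∈ Finset.Icc 1 ⌊u⌋₊, χ (k : ZMod q) - u * charMean χ) := by
    have h1 : Measurable fun n : ℕ => ∑ k ∈ Finset.Icc 1 n, χ (k : ZMod q) := by fun_prop
    exact (h1.comp Nat.measurable_floor).sub (by fun_prop)
  have hi := integrableOn_Ioi_mul_cpow hR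
    (fun u hu => norm_sum_Icc_char_sub_le χ (by linarith)) (s := s) (by linarith)
  have hi2 : IntegrableOn (fun u : ℝ => charMean χ * (u : ℂ) ^ (-s)) (Ioi 1) :=
    (integrableOn_Ioi_cpow_of_lt (by simpa using hs) zero_lt_one).const_mul _
  rw [DirichletCharacter.LFunction_eq_LSeries χ hs,
    LSeries_eq_mul_integral' _ zero_le_one hs hO]
  have h2 : ∫ u in Ioi (1 : ℝ), (∑ k ∈ Finset.Icc 1 ⌊u⌋₊, χ (k : ZMod q)) * (u : ℂ) ^ (-(s + 1))
      = (∫ u in Ioi (1 : ℝ), charMean χ * (u : ℂ) ^ (-s)) + ∫ u in Ioi (1 : ℝ),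
      (∑ k ∈ Finset.Icc 1 ⌊u⌋₊, χ (k : ZMod q) - u * charMean χ) * (u : ℂ) ^ (-(s + 1)) := by
    rw [← integral_add hi2 hi]
    refine setIntegral_congr_fun measurableSet_Ioi fun u (hu : 1 < u) => ?_
    have hu0 : (u : ℂ) ≠ 0 := by exact_mod_cast (by linarith : u ≠ 0)
    have : (u : ℂ) ^ (-s) = u * (u : ℂ) ^ (-(s + 1)) := by
      rw [show -s = 1 + -(s + 1) by ring, cpow_add _ _ hu0, cpow_one]
    simp only [this]; ring
  rw [h2, integral_const_mul, integral_Ioi_cpow_of_lt (by simpa using hs) zero_lt_one]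
  have h3 : s - 1 ≠ 0 := sub_ne_zero.mpr (by rintro rfl; simp at hs)
  have h4 : -s + 1 ≠ 0 := by intro h; apply h3; linear_combination -h
  simp only [ofReal_one, one_cpow]
  field_simp
  ring

lemma norm_regL_le (χ : DirichletCharacter ℂ q) {s : ℂ} (hs : 1 / 4 ≤ s.re) :
    ‖regL χ s‖ ≤ 13 * q * (‖s‖ + 1) ^ 2 := by
  set R : ℝ → ℂ := fun u => ∑ k ∈ Finset.Icc 1 ⌊u⌋₊, χ (k : ZMod q) - u * charMean χ with hRdef
  set I : ℂ → ℂ := fun s => ∫ u in Ioi (1 : ℝ), R u * (u : ℂ) ^ (-(s + 1)) with hI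
  have hR : Measurable R := by
    have h1 : Measurable fun n : ℕ => ∑ k ∈ Finset.Icc 1 n, χ (k : ZMod q) := by fun_prop
    exact (h1.comp Nat.measurable_floor).sub (by fun_prop)
  have hRb : ∀ u, 1 < u → ‖R u‖ ≤ 3 * q := fun u hu =>
    norm_sum_Icc_char_sub_le χ (by linarith)
  have hId : ∀ s : ℂ, 0 < s.re → DifferentiableAt ℂ I s := fun s hs =>
    differentiableAt_integral_Ioi_mul_cpow hR hRb hs
  have hIb : ‖I s‖ ≤ 12 * q := by
    refine (norm_integral_Ioi_mul_cpow_le hRb (by linarith)).trans ?_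
    rw [div_le_iff₀ (by linarith)]
    have : (0 : ℝ) ≤ q := by positivity
    nlinarith
  have hopen : IsOpen {z : ℂ | 0 < z.re} := isOpen_lt continuous_const continuous_re
  have hconn : IsPreconnected {z : ℂ | 0 < z.re} := (convex_halfSpace_re_gt 0).isPreconnected
  have hev : ∀ᶠ z in 𝓝 (2 : ℂ), 1 < z.re :=
    (isOpen_lt continuous_const continuous_re).mem_nhds (by simp)
  have hq : (1 : ℝ) ≤ q := by exact_mod_cast Nat.one_le_iff_ne_zero.mpr (NeZero.ne q)
  have hs0 := norm_nonneg s
  by_cases hχ : χ = 1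
  · have heq : EqOn (regL χ) (fun z => charMean χ * z + z * (z - 1) * I z) {z : ℂ | 0 < z.re} := by
      refine AnalyticOnNhd.eqOn_of_preconnected_of_eventuallyEq
        ((differentiable_regL χ).differentiableOn.analyticOnNhd hopen)
        (DifferentiableOn.analyticOnNhd (fun z hz => ?_) hopen) hconn (z₀ := 2) (by simp) ?_
      · have := hId z hz
        exact DifferentiableAt.differentiableWithinAt (by fun_prop)
      · filter_upwards [hev] with z hz
        have h1 : z ≠ 1 := by rintro rfl; simp at hz
        have h3 : z - 1 ≠ 0 := sub_ne_zero.mpr h1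
        have h2 := LFunction_eq_charMean_add_integral χ hz
        rw [hχ] at h2 ⊢
        rw [regL_one_apply h1, h2]
        simp only [hI, hRdef, hχ]
        field_simp
    rw [heq (show 0 < s.re by linarith)]
    calc _ ≤ ‖charMean χ‖ * ‖s‖ + ‖s‖ * ‖s - 1‖ * ‖I s‖ := by
          refine (norm_add_le _ _).trans ?_; simp
      _ ≤ 1 * ‖s‖ + ‖s‖ * (‖s‖ + 1) * (12 * q) := by
          gcongr
          · exact norm_charMean_le χ
          · exact (norm_sub_le _ _).trans (by simp)
      _ ≤ _ := by nlinarith [mul_nonneg hs0 hs0, mul_nonneg (by linarith : (0 : ℝ) ≤ q - 1) hs0]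
  · have heq : EqOn (regL χ) (fun z => z * I z) {z : ℂ | 0 < z.re} := by
      refine AnalyticOnNhd.eqOn_of_preconnected_of_eventuallyEq
        ((differentiable_regL χ).differentiableOn.analyticOnNhd hopen)
        (DifferentiableOn.analyticOnNhd (fun z hz => ?_) hopen) hconn (z₀ := 2) (by simp) ?_
      · have := hId z hz
        exact DifferentiableAt.differentiableWithinAt (by fun_prop)
      · filter_upwards [hev] with z hz
        rw [regL_of_ne_one hχ, LFunction_eq_charMean_add_integral χ hz]
        simp only [hI, hRdef, charMean_of_ne_one hχ]
        simp
    rw [heq (show 0 < s.re by linarith), norm_mul]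
    calc _ ≤ ‖s‖ * (12 * q) := by gcongr
      _ ≤ _ := by nlinarith [mul_nonneg hs0 hs0, mul_nonneg (by linarith : (0 : ℝ) ≤ q) hs0,
        mul_nonneg (by linarith : (0 : ℝ) ≤ q) (mul_nonneg hs0 hs0)]

lemma one_third_le_norm_LFunction (χ : DirichletCharacter ℂ q) {s : ℂ} (hs : s.re = 2) :
    1 / 3 ≤ ‖χ.LFunction s‖ := by
  have hs1 : 1 < s.re := by rw [hs]; norm_num
  rw [DirichletCharacter.LFunction_eq_LSeries χ hs1]
  have hsum : Summable (LSeries.term (fun n : ℕ => χ (n : ZMod q)) s) :=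
    DirichletCharacter.LSeriesSummable_of_one_lt_re χ hs1
  have h1 : LSeries (fun n : ℕ => χ (n : ZMod q)) s
      = 1 + ∑' n, LSeries.term (fun n : ℕ => χ (n : ZMod q)) s (n + 2) := by
    rw [LSeries, ← hsum.sum_add_tsum_nat_add 2]
    simp [Finset.sum_range_succ, LSeries.term]
  have hz := hasSum_zeta_two
  have hz2 : HasSum (fun n : ℕ => 1 / ((n + 2 : ℕ) : ℝ) ^ 2) (Real.pi ^ 2 / 6 - 1) := by
    have := (hasSum_nat_add_iff' 2).mpr hz
    simpa [Finset.sum_range_succ] using this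
  have h2 : ‖∑' n, LSeries.term (fun n : ℕ => χ (n : ZMod q)) s (n + 2)‖
      ≤ Real.pi ^ 2 / 6 - 1 := by
    refine tsum_of_norm_bounded hz2 fun n => ?_
    rw [LSeries.norm_term_eq, if_neg (by omega), hs]
    rw [show ((n + 2 : ℕ) : ℝ) ^ (2 : ℝ) = ((n + 2 : ℕ) : ℝ) ^ (2 : ℕ) from by
      rw [← Real.rpow_natCast]; norm_num]
    gcongr
    exact χ.norm_le_one _
  have h3 : Real.pi ^ 2 / 6 - 1 ≤ 2 / 3 := by
    nlinarith [Real.pi_lt_d2, Real.pi_pos]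
  rw [h1]
  have h4 := norm_sub_norm_le (1 : ℂ)
    (-∑' n, LSeries.term (fun n : ℕ => χ (n : ZMod q)) s (n + 2))
  rw [sub_neg_eq_add, norm_neg, norm_one] at h4
  linarith

lemma one_third_le_norm_regL (χ : DirichletCharacter ℂ q) {s : ℂ} (hs : s.re = 2) :
    1 / 3 ≤ ‖regL χ s‖ := by
  by_cases hχ : χ = 1
  · have h1 : s ≠ 1 := by rintro rfl; norm_num at hs
    rw [hχ, regL_one_apply h1, norm_mul]
    have h2 : 1 ≤ ‖s - 1‖ := by
      refine le_trans ?_ (re_le_norm _)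
      rw [sub_re, hs]; norm_num
    have h3 := one_third_le_norm_LFunction (1 : DirichletCharacter ℂ q) hs
    nlinarith
  · rw [regL_of_ne_one hχ]; exact one_third_le_norm_LFunction χ hs

lemma norm_regL_le_mul_exp (χ : DirichletCharacter ℂ q) {c z : ℂ} (hc : c.re = 2)
    (hz : ‖z - c‖ ≤ 7 / 4) :
    ‖regL χ z‖ ≤ ‖regL χ c‖ * Real.exp (5 * Real.log (q * (|c.im| + 5))) := by
  have hq : (1 : ℝ) ≤ q := by exact_mod_cast Nat.one_le_iff_ne_zero.mpr (NeZero.ne q)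
  set T := |c.im| + 5 with hT
  have hT5 : 5 ≤ T := by rw [hT]; linarith [abs_nonneg c.im]
  have h1 : 1 / 4 ≤ z.re := by
    have := (abs_re_le_norm (z - c)).trans hz
    rw [sub_re, hc, abs_le] at this
    linarith
  have h2 : ‖z‖ + 1 ≤ T := by
    have h3 : ‖c‖ ≤ 2 + |c.im| := by
      refine (norm_le_abs_re_add_abs_im c).trans ?_
      rw [hc]; norm_num
    have h4 : ‖z‖ ≤ ‖z - c‖ + ‖c‖ := by simpa using norm_add_le (z - c) c
    rw [hT]; linarith
  have h5 : Real.exp (5 * Real.log (q * T)) = (q * T) ^ 5 := by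
    rw [mul_comm, Real.exp_mul, Real.exp_log (by positivity)]; norm_cast
  rw [h5]
  have h6 := one_third_le_norm_regL χ hc
  have h7 := norm_nonneg z
  calc _ ≤ 13 * q * (‖z‖ + 1) ^ 2 := norm_regL_le χ h1
    _ ≤ 13 * q * T ^ 2 := by gcongr
    _ ≤ 1 / 3 * (q ^ 1 * T ^ 5) := by
      rw [show (1 : ℝ) / 3 * (q ^ 1 * T ^ 5) = 1 / 3 * T ^ 3 * (q * T ^ 2) by ring,
        show (13 : ℝ) * q * T ^ 2 = 13 * (q * T ^ 2) by ring]
      gcongr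
      have : (5 : ℝ) ^ 3 ≤ T ^ 3 := by gcongr
      linarith
    _ ≤ 1 / 3 * (q * T) ^ 5 := by
      rw [mul_pow]; gcongr
      norm_num
    _ ≤ _ := by gcongr

lemma neg_logDeriv_regL (χ : DirichletCharacter ℂ q) {s : ℂ} (hs : 1 < s.re) :
    -logDeriv (regL χ) s =
        LSeries ((fun n : ℕ => χ n) * fun n : ℕ => (Λ n : ℂ)) s - poleOrder χ / (s - 1) := by
  rw [DirichletCharacter.LSeries_twist_vonMangoldt_eq χ hs,
    ← DirichletCharacter.deriv_LFunction_eq_deriv_LSeries χ hs,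
    ← DirichletCharacter.LFunction_eq_LSeries χ hs, logDeriv_apply]
  have h1 : s ≠ 1 := by rintro rfl; simp at hs
  have h3 : s - 1 ≠ 0 := sub_ne_zero.mpr h1
  by_cases hχ : χ = 1
  · have h2 : (1 : DirichletCharacter ℂ q).LFunction s ≠ 0 :=
      DirichletCharacter.LFunction_ne_zero_of_one_le_re _ (.inr h1) hs.le
    rw [hχ, regL_one_apply h1, regL_one,
      DirichletCharacter.deriv_LFunctionTrivChar₁_apply_of_ne_one _ h1, poleOrder, if_pos rfl]
    simp only [DirichletCharacter.LFunctionTrivChar] at *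
    field_simp
    simp
    ring
  · rw [regL_of_ne_one hχ, poleOrder, if_neg hχ]
    simp [neg_div]

lemma re_eq_half_of_regL_eq_zero (erh : ∀ (χ : DirichletCharacter ℂ q) (s : ℂ),
    0 < s.re → s.re < 1 → χ.LFunction s = 0 → s.re = 1 / 2) (χ : DirichletCharacter ℂ q) {s : ℂ}
    (hs : 0 < s.re) (h : regL χ s = 0) : s.re = 1 / 2 := by
  have h1 : s.re < 1 := by
    by_contra h1
    exact regL_ne_zero_of_one_le_re χ (not_lt.mp h1) h
  refine erh χ s hs h1 ?_
  by_cases hχ : χ = 1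
  · have h2 : s ≠ 1 := by rintro rfl; simp at h1
    subst hχ
    rw [regL_one_apply h2] at h
    exact (mul_eq_zero.mp h).resolve_left (sub_ne_zero.mpr h2)
  · rwa [regL_of_ne_one hχ] at h

/-- The Dirichlet series of the von Mangoldt function has at most a simple pole at `1`. -/
lemma exists_tsum_vonMangoldt_le : ∃ B : ℝ, 0 < B ∧ ∀ ε : ℝ, 0 < ε → ε ≤ 1 →
    Summable (fun n : ℕ => Λ n / (n : ℝ) ^ (1 + ε)) ∧
      ∑' n : ℕ, Λ n / (n : ℝ) ^ (1 + ε) ≤ B / ε := by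
  have hcont : ContinuousOn (fun x : ℝ => -logDeriv (regL (1 : DirichletCharacter ℂ 1)) x)
      (Icc 1 2) := by
    intro x hx
    refine ContinuousAt.continuousWithinAt ?_
    have h1 := differentiable_regL (1 : DirichletCharacter ℂ 1)
    have h2 : ContinuousAt (logDeriv (regL (1 : DirichletCharacter ℂ 1))) (x : ℂ) := by
      unfold logDeriv
      exact h1.deriv.continuous.continuousAt.div h1.continuous.continuousAt
        (regL_ne_zero_of_one_le_re _ (by simpa using hx.1))
    exact (h2.comp continuous_ofReal.continuousAt).neg
  obtain ⟨B, hB⟩ := isCompact_Icc.exists_bound_of_continuousOn hcont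
  have hB0 : 0 ≤ B := (norm_nonneg _).trans (hB 1 (by simp))
  refine ⟨B + 1, by linarith, fun ε hε hε1 => ?_⟩
  have hre : 1 < ((1 + ε : ℝ) : ℂ).re := by rw [ofReal_re]; linarith
  have h1 := DirichletCharacter.LSeriesSummable_twist_vonMangoldt (1 : DirichletCharacter ℂ 1) hre
  have h2 := neg_logDeriv_regL (1 : DirichletCharacter ℂ 1) hre
  have hterm : ∀ n,
      LSeries.term ((fun n : ℕ => (1 : DirichletCharacter ℂ 1) n) * fun n : ℕ => (Λ n : ℂ))
        ((1 + ε : ℝ) : ℂ) n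
      = ((Λ n / (n : ℝ) ^ (1 + ε) : ℝ) : ℂ) := by
    intro n
    rcases eq_or_ne n 0 with rfl | hn
    · simp
    · rw [LSeries.term_of_ne_zero hn, ofReal_div, ofReal_cpow (by positivity)]
      simp [MulChar.one_apply (isUnit_of_subsingleton _)]
  have h3 : Summable (fun n : ℕ => Λ n / (n : ℝ) ^ (1 + ε)) := by
    have : Summable (fun n : ℕ => ((Λ n / (n : ℝ) ^ (1 + ε) : ℝ) : ℂ)) := by
      refine Summable.congr h1 fun n => ?_
      rw [← hterm n]
    exact_mod_cast this
  refine ⟨h3, ?_⟩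
  have h4 :
      LSeries ((fun n : ℕ => (1 : DirichletCharacter ℂ 1) n) * fun n : ℕ => (Λ n : ℂ))
        ((1 + ε : ℝ) : ℂ)
      = ((∑' n : ℕ, Λ n / (n : ℝ) ^ (1 + ε) : ℝ) : ℂ) := by
    rw [LSeries, ofReal_tsum]
    exact tsum_congr hterm
  have h5 := hB (1 + ε) ⟨by linarith, by linarith⟩
  rw [h2, h4, poleOrder, if_pos rfl] at h5
  have h6 : (((∑' n : ℕ, Λ n / (n : ℝ) ^ (1 + ε) : ℝ) : ℂ) - ((1 : ℝ) : ℂ) / ((1 + ε : ℝ) - 1))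
      = ((∑' n : ℕ, Λ n / (n : ℝ) ^ (1 + ε) - 1 / ε : ℝ) : ℂ) := by
    push_cast; ring
  rw [h6, norm_real, Real.norm_eq_abs, abs_le] at h5
  have h7 : B ≤ B / ε := by rw [le_div_iff₀ hε]; nlinarith
  rw [add_div]
  linarith [h5.2]

lemma norm_term_twist_vonMangoldt_le {q : ℕ} (χ : DirichletCharacter ℂ q) (s : ℂ) (n : ℕ) :
    ‖LSeries.term ((fun n : ℕ => χ n) * fun n : ℕ => (Λ n : ℂ)) s n‖ ≤ Λ n / (n : ℝ) ^ s.re := by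
  rw [LSeries.norm_term_eq]
  rcases eq_or_ne n 0 with rfl | hn
  · simp
  · rw [if_neg hn]
    gcongr
    rw [Pi.mul_apply, norm_mul, norm_real,
      Real.norm_of_nonneg ArithmeticFunction.vonMangoldt_nonneg]
    exact mul_le_of_le_one_left ArithmeticFunction.vonMangoldt_nonneg (χ.norm_le_one _)

end RegularizedLFunction

section Kernel

open Complex MeasureTheory Set Filter Topology
open scoped ArithmeticFunction.vonMangoldt

lemma integral_cpow_neg_mul_eq {f : ℝ → ℂ} {F : ℂ → ℂ} {c x : ℝ} (hx : 0 < x)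
    (hf : ∀ t : ℝ, HasMellin f (c + t * I) (F (c + t * I)))
    (hF : Integrable fun t : ℝ => F (c + t * I)) (hc : ContinuousAt f x) :
    ∫ t : ℝ, (x : ℂ) ^ (-(c + t * I) : ℂ) * F (c + t * I) = 2 * Real.pi * f x := by
  have hm : ∀ t : ℝ, mellin f (c + t * I) = F (c + t * I) := fun t => (hf t).2
  have h1 : MellinConvergent f c := by simpa using (hf 0).1
  have h2 : VerticalIntegrable (mellin f) c := by
    unfold VerticalIntegrable; simpa only [hm] using hF
  have h3 := mellinInv_mellin_eq c f hx h1 h2 hc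
  rw [mellinInv] at h3
  simp only [hm, smul_eq_mul, real_smul] at h3
  rw [← h3]
  have : (Real.pi : ℂ) ≠ 0 := by exact_mod_cast Real.pi_ne_zero
  have h4 : (2 * Real.pi : ℂ) * ((1 / (2 * Real.pi) : ℝ) : ℂ) = 1 := by
    push_cast
    field_simp
  rw [← mul_assoc, h4, one_mul]

lemma norm_add_mul_I_sq (c t : ℝ) : ‖(c + t * I : ℂ)‖ ^ 2 = c ^ 2 + t ^ 2 := by
  rw [← normSq_eq_norm_sq, normSq_add_mul_I]

lemma norm_add_mul_I_le_add_one {c : ℝ} (hc : 0 ≤ c) (t : ℝ) :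
    ‖(c + t * I : ℂ)‖ ≤ ‖(c + t * I : ℂ) + 1‖ := by
  rw [show (c + t * I : ℂ) + 1 = ((c + 1 : ℝ) : ℂ) + t * I by push_cast; ring]
  refine abs_le_of_sq_le_sq' ?_ (norm_nonneg _) |>.2
  rw [norm_add_mul_I_sq, norm_add_mul_I_sq]
  nlinarith

lemma integrable_inv_sq_add_sq {c : ℝ} (hc : 0 < c) :
    Integrable fun t : ℝ => (c ^ 2 + t ^ 2)⁻¹ := by
  have h := (integrable_inv_one_add_sq.comp_div hc.ne').const_mul ((c ^ 2)⁻¹)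
  refine h.congr (ae_of_all _ fun t => ?_)
  simp only
  field_simp

lemma integrable_inv_mul_add_one {c : ℝ} (hc : 0 < c) :
    Integrable fun t : ℝ => 1 / (((c : ℂ) + t * I) * ((c + t * I) + 1)) := by
  have h0 : ∀ t : ℝ, ((c : ℂ) + t * I) ≠ 0 := fun t h => by
    have := congrArg re h; simp at this; linarith
  have h1 : ∀ t : ℝ, ((c : ℂ) + t * I) + 1 ≠ 0 := fun t h => by
    have := congrArg re h; simp at this; linarith
  refine (integrable_inv_sq_add_sq hc).mono' ?_ (ae_of_all _ fun t => ?_)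
  · refine Continuous.aestronglyMeasurable ?_
    exact continuous_const.div (by fun_prop) fun t => mul_ne_zero (h0 t) (h1 t)
  · rw [norm_div, norm_one, norm_mul, one_div]
    refine inv_anti₀ (by positivity) ?_
    rw [← norm_add_mul_I_sq, sq]
    gcongr
    exact norm_add_mul_I_le_add_one hc.le t

/-- The kernel `y ^ (s + 1) / (s (s + 1))` of Riesz summation. -/
noncomputable def rieszKernel (y : ℝ) (s : ℂ) : ℂ := (y : ℂ) ^ (s + 1) / (s * (s + 1))

lemma rieszKernel_mul_cpow {y x : ℝ} (hy : 0 < y) (hx : 0 < x) (s : ℂ) :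
    rieszKernel y s * (x : ℂ) ^ (-s)
      = y * (((x / y : ℝ) : ℂ) ^ (-s) * (1 / (s * (s + 1)))) := by
  have hy0 : (y : ℂ) ≠ 0 := by exact_mod_cast hy.ne'
  rw [rieszKernel, cpow_add _ _ hy0, cpow_one, div_eq_mul_inv x y,
    ofReal_mul, mul_cpow_ofReal_nonneg hx.le (by positivity), ofReal_inv, inv_cpow _ _ (by
      rw [arg_ofReal_of_nonneg hy.le]; exact Real.pi_pos.ne), cpow_neg (y : ℂ), inv_inv]
  ring

lemma hasMellin_riesz {s : ℂ} (hs : 0 < s.re) :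
    HasMellin (fun u : ℝ => (Ioc (0 : ℝ) 1).indicator (fun _ => (1 : ℂ)) u
      - (Ioc (0 : ℝ) 1).indicator (fun t : ℝ => (t : ℂ) ^ (1 : ℂ)) u) s (1 / (s * (s + 1))) := by
  have h1 := hasMellin_one_Ioc hs
  have h2 := hasMellin_cpow_Ioc 1 (s := s) (by simp; linarith)
  have h3 := hasMellin_sub h1.1 h2.1
  rw [h1.2, h2.2] at h3
  have h0 : s ≠ 0 := by rintro rfl; simp at hs
  have h0' : s + 1 ≠ 0 := fun h => by have := congrArg re h; simp at this; linarith
  have h4 : 1 / (s * (s + 1)) = 1 / s - 1 / (s + 1) := by field_simp; ring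
  rw [h4]
  exact h3

lemma integral_rieszKernel_mul_cpow {c y x : ℝ} (hc : 0 < c) (hy : 0 < y) (hx : 0 < x) :
    ∫ t : ℝ, rieszKernel y (c + t * I) * (x : ℂ) ^ (-(c + t * I) : ℂ)
      = 2 * Real.pi * max (y - x) 0 := by
  simp_rw [rieszKernel_mul_cpow hy hx]
  rw [integral_const_mul]
  have hxy : 0 < x / y := by positivity
  have heq : (fun u : ℝ => (Ioc (0 : ℝ) 1).indicator (fun _ => (1 : ℂ)) u
      - (Ioc (0 : ℝ) 1).indicator (fun t : ℝ => (t : ℂ) ^ (1 : ℂ)) u)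
      =ᶠ[𝓝 (x / y)] fun u => ((max (1 - u) 0 : ℝ) : ℂ) := by
    filter_upwards [Ioi_mem_nhds hxy] with u (hu : 0 < u)
    rcases le_or_gt u 1 with h | h
    · have hm : u ∈ Ioc (0 : ℝ) 1 := ⟨hu, h⟩
      rw [indicator_of_mem hm, indicator_of_mem hm, max_eq_left (by linarith)]
      simp
    · have hm : u ∉ Ioc (0 : ℝ) 1 := fun h' => h.not_ge h'.2
      rw [indicator_of_notMem hm, indicator_of_notMem hm, max_eq_right (by linarith)]
      simp
  have hcont : ContinuousAt (fun u : ℝ => ((max (1 - u) 0 : ℝ) : ℂ)) (x / y) := by fun_prop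
  rw [integral_cpow_neg_mul_eq (F := fun s => 1 / (s * (s + 1))) hxy
    (fun t => hasMellin_riesz (by simpa using hc)) (integrable_inv_mul_add_one hc)
    (hcont.congr heq.symm), heq.eq_of_nhds]
  have : max (y - x) 0 = y * max (1 - x / y) 0 := by
    rw [mul_max_of_nonneg _ _ hy.le]; congr 1 <;> field_simp
    simp
  rw [this]; push_cast; ring

lemma hasMellin_riesz_pole {s : ℂ} (hs : 1 < s.re) :
    HasMellin (fun u : ℝ => ((1 / 2 : ℂ) • (Ioc (0 : ℝ) 1).indicator
        (fun t : ℝ => (t : ℂ) ^ (-1 : ℂ)) u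
      - (Ioc (0 : ℝ) 1).indicator (fun _ => (1 : ℂ)) u)
      + (1 / 2 : ℂ) • (Ioc (0 : ℝ) 1).indicator (fun t : ℝ => (t : ℂ) ^ (1 : ℂ)) u) s
      (1 / (s * (s + 1)) * (1 / (s - 1))) := by
  have h1 := hasMellin_one_Ioc (s := s) (by linarith)
  have h2 := hasMellin_cpow_Ioc 1 (s := s) (by simp; linarith)
  have h3 := hasMellin_cpow_Ioc (-1) (s := s) (by simp; linarith)
  have h4 := hasMellin_const_smul h3.1 (1 / 2 : ℂ)
  have h5 := hasMellin_const_smul h2.1 (1 / 2 : ℂ)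
  have h6 := hasMellin_sub h4.1 h1.1
  have h7 := hasMellin_add h6.1 h5.1
  rw [h6.2, h5.2, h4.2, h1.2, h2.2, h3.2] at h7
  have h0 : s ≠ 0 := by rintro rfl; simp at hs; linarith
  have h0' : s + 1 ≠ 0 := fun h => by have := congrArg re h; simp at this; linarith
  have h0'' : s - 1 ≠ 0 := fun h => by have := congrArg re h; simp at this; linarith
  have h8 : 1 / (s * (s + 1)) * (1 / (s - 1))
      = ((1 / 2 : ℂ) • (1 / (s + -1)) - 1 / s) + (1 / 2 : ℂ) • (1 / (s + 1)) := by
    rw [smul_eq_mul, smul_eq_mul, ← sub_eq_add_neg]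
    field_simp
    ring
  rw [h8]
  exact h7

lemma integral_rieszKernel_div_sub_one {c y : ℝ} (hc : 1 < c) (hy : 1 ≤ y) :
    ∫ t : ℝ, rieszKernel y (c + t * I) / ((c + t * I : ℂ) - 1)
      = 2 * Real.pi * ((y - 1) ^ 2 / 2) := by
  have hy0 : 0 < y := by linarith
  have h1 : ∀ t : ℝ, rieszKernel y (c + t * I) / ((c + t * I : ℂ) - 1)
      = y * (((1 / y : ℝ) : ℂ) ^ (-(c + t * I) : ℂ) *
        (1 / ((c + t * I : ℂ) * ((c + t * I) + 1)) * (1 / ((c + t * I : ℂ) - 1)))) := by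
    intro t
    have := rieszKernel_mul_cpow hy0 one_pos (c + t * I)
    rw [ofReal_one, one_cpow, mul_one] at this
    rw [this]; ring
  simp_rw [h1]
  rw [integral_const_mul]
  have hxy : 0 < 1 / y := by positivity
  have heq : (fun u : ℝ => ((1 / 2 : ℂ) • (Ioc (0 : ℝ) 1).indicator
        (fun t : ℝ => (t : ℂ) ^ (-1 : ℂ)) u
      - (Ioc (0 : ℝ) 1).indicator (fun _ => (1 : ℂ)) u)
      + (1 / 2 : ℂ) • (Ioc (0 : ℝ) 1).indicator (fun t : ℝ => (t : ℂ) ^ (1 : ℂ)) u)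
      =ᶠ[𝓝 (1 / y)] fun u => ((max (1 - u) 0 ^ 2 / (2 * u) : ℝ) : ℂ) := by
    filter_upwards [Ioi_mem_nhds hxy] with u (hu : 0 < u)
    have hu0 : (u : ℂ) ≠ 0 := by exact_mod_cast hu.ne'
    rcases le_or_gt u 1 with h | h
    · have hm : u ∈ Ioc (0 : ℝ) 1 := ⟨hu, h⟩
      rw [indicator_of_mem hm, indicator_of_mem hm, indicator_of_mem hm,
        max_eq_left (by linarith)]
      push_cast
      rw [cpow_one, cpow_neg_one, smul_eq_mul, smul_eq_mul]
      field_simp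
      ring
    · have hm : u ∉ Ioc (0 : ℝ) 1 := fun h' => h.not_ge h'.2
      rw [indicator_of_notMem hm, indicator_of_notMem hm, indicator_of_notMem hm,
        max_eq_right (by linarith)]
      simp
  have hcont : ContinuousAt (fun u : ℝ => ((max (1 - u) 0 ^ 2 / (2 * u) : ℝ) : ℂ)) (1 / y) := by
    refine continuous_ofReal.continuousAt.comp ?_
    refine ContinuousAt.div (by fun_prop) (by fun_prop) (by positivity)
  have hinteg : Integrable fun t : ℝ =>
      1 / (((c : ℂ) + t * I) * ((c + t * I) + 1)) * (1 / ((c + t * I : ℂ) - 1)) := by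
    refine (integrable_inv_mul_add_one (c := c) (by linarith)).mul_bdd (c := 1 / (c - 1)) ?_
      (ae_of_all _ fun t => ?_)
    · refine Continuous.aestronglyMeasurable ?_
      refine continuous_const.div (by fun_prop) fun t h => ?_
      have := congrArg re h; simp at this; linarith
    · rw [norm_div, norm_one]
      have h2 : c - 1 ≤ ‖(c + t * I : ℂ) - 1‖ := by
        refine le_trans (le_of_eq ?_) (re_le_norm _); simp
      have : 0 < c - 1 := by linarith
      gcongr
  rw [integral_cpow_neg_mul_eq (F := fun s => 1 / (s * (s + 1)) * (1 / (s - 1))) hxy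
    (fun t => hasMellin_riesz_pole (by simpa using hc)) hinteg
    (hcont.congr heq.symm), heq.eq_of_nhds]
  have h3 : max (1 - 1 / y) 0 = 1 - 1 / y := by
    refine max_eq_left ?_
    rw [sub_nonneg, div_le_one hy0]; exact hy
  rw [h3]
  have hyc : (y : ℂ) ≠ 0 := by exact_mod_cast hy0.ne'
  push_cast
  field_simp

lemma norm_rieszKernel {y : ℝ} (hy : 0 < y) (s : ℂ) :
    ‖rieszKernel y s‖ = y ^ (s.re + 1) / (‖s‖ * ‖s + 1‖) := by
  rw [rieszKernel, norm_div, norm_mul, norm_cpow_eq_rpow_re_of_pos hy, add_re, one_re]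

lemma integrable_rieszKernel {c y : ℝ} (hc : 0 < c) (hy : 0 < y) :
    Integrable fun t : ℝ => rieszKernel y (c + t * I) := by
  have h : ∀ t : ℝ, rieszKernel y (c + t * I)
      = (y : ℂ) ^ (c + t * I + 1 : ℂ) * (1 / (((c : ℂ) + t * I) * ((c + t * I) + 1))) := by
    intro t; rw [rieszKernel]; ring
  simp_rw [h]
  have hy0 : (y : ℂ) ≠ 0 := by exact_mod_cast hy.ne'
  refine (integrable_inv_mul_add_one hc).bdd_mul (c := y ^ (c + 1)) ?_ (ae_of_all _ fun t => ?_)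
  · refine Continuous.aestronglyMeasurable ?_
    exact Continuous.const_cpow (by fun_prop) (.inl hy0)
  · rw [norm_cpow_eq_rpow_re_of_pos hy]; simp

lemma hasSum_integral_rieszKernel_mul_LSeries {q : ℕ} (χ : DirichletCharacter ℂ q) {c y : ℝ}
    (hc : 1 < c) (hy : 0 < y) (hΛ : Summable (fun n : ℕ => Λ n / (n : ℝ) ^ c)) :
    HasSum (fun n : ℕ => (2 * Real.pi * (χ n * (Λ n * max (y - n) 0 : ℝ)) : ℂ))
      (∫ t : ℝ, rieszKernel y (c + t * I) *
          LSeries ((fun n : ℕ => χ n) * fun n : ℕ => (Λ n : ℂ)) (c + t * I)) := by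
  have hc0 : 0 < c := by linarith
  have hK := integrable_rieszKernel hc0 hy
  set F : ℕ → ℝ → ℂ := fun n t => rieszKernel y (c + t * I) *
    LSeries.term ((fun n : ℕ => χ n) * fun n : ℕ => (Λ n : ℂ)) (c + t * I) n with hF
  have hterm : ∀ n : ℕ, n ≠ 0 → ∀ s : ℂ,
      LSeries.term ((fun n : ℕ => χ n) * fun n : ℕ => (Λ n : ℂ)) s n
      = (χ n * Λ n) * ((n : ℝ) : ℂ) ^ (-s) := by
    intro n hn s
    rw [LSeries.term_of_ne_zero hn, cpow_neg, ofReal_natCast]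
    rfl
  have hFn : ∀ n t, ‖F n t‖ ≤ ‖rieszKernel y (c + t * I)‖ * (Λ n / (n : ℝ) ^ c) := by
    intro n t
    rw [hF]; simp only [norm_mul]
    gcongr
    simpa using norm_term_twist_vonMangoldt_le χ (c + t * I) n
  have hFi : ∀ n, Integrable (F n) := by
    intro n
    refine (hK.norm.mul_const (Λ n / (n : ℝ) ^ c)).mono' ?_ (ae_of_all _ (hFn n))
    refine hK.aestronglyMeasurable.mul ?_
    rcases eq_or_ne n 0 with rfl | hn
    · simpa using aestronglyMeasurable_const
    · simp_rw [hterm n hn]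
      refine Continuous.aestronglyMeasurable ?_
      refine continuous_const.mul (Continuous.const_cpow (by fun_prop) (.inl ?_))
      exact_mod_cast hn
  have hS : Summable fun n => ∫ t, ‖F n t‖ := by
    refine Summable.of_nonneg_of_le (fun n => by positivity) (fun n => ?_)
      (hΛ.mul_left (∫ t : ℝ, ‖rieszKernel y (c + t * I)‖))
    rw [← integral_mul_const]
    exact integral_mono (hFi n).norm (hK.norm.mul_const _) (hFn n)
  have h := hasSum_integral_of_summable_integral_norm hFi hS
  have h1 : (fun n : ℕ => (2 * Real.pi * (χ n * (Λ n * max (y - n) 0 : ℝ)) : ℂ))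
      = fun n => ∫ t, F n t := by
    ext n
    rcases eq_or_ne n 0 with rfl | hn
    · simp [hF]
    · have h2 : ∀ t : ℝ, F n t = (χ n * Λ n) *
          (rieszKernel y (c + t * I) * ((n : ℝ) : ℂ) ^ (-(c + t * I) : ℂ)) := by
        intro t; simp only [hF, hterm n hn]; ring
      simp_rw [h2]
      rw [integral_const_mul, integral_rieszKernel_mul_cpow hc0 hy (by positivity)]
      push_cast; ring
  have h2 : (∫ t : ℝ, rieszKernel y (c + t * I) *
      LSeries ((fun n : ℕ => χ n) * fun n : ℕ => (Λ n : ℂ)) (c + t * I))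
      = ∫ t : ℝ, ∑' n, F n t := by
    refine integral_congr_ae (ae_of_all _ fun t => ?_)
    simp only [hF]
    rw [tsum_mul_left]
    rfl
  rw [h1, h2]
  exact h

end Kernel

section ContourShift

open Complex MeasureTheory Set Filter Topology

lemma integrable_vertical {Φ : ℂ → ℂ} {σ C : ℝ}
    (hd : ∀ t : ℝ, DifferentiableAt ℂ Φ (σ + t * I))
    (hb : ∀ t : ℝ, ‖Φ (σ + t * I)‖ ≤ C * (1 + |t|) ^ (-(3 / 2) : ℝ)) :
    Integrable fun t : ℝ => Φ (σ + t * I) := by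
  have h1 : Integrable fun t : ℝ => C * (1 + ‖t‖) ^ (-(3 / 2) : ℝ) :=
    (integrable_one_add_norm (by simp; norm_num)).const_mul C
  refine h1.mono' ?_ (ae_of_all _ hb)
  refine Continuous.aestronglyMeasurable (continuous_iff_continuousAt.mpr fun t => ?_)
  exact ContinuousAt.comp (f := fun t : ℝ => (σ + t * I : ℂ)) (hd t).continuousAt (by fun_prop)

/-- Moving a vertical line of integration. -/
lemma integral_vertical_eq {Φ : ℂ → ℂ} {σ₁ σ₂ C : ℝ} (hσ : σ₁ ≤ σ₂)
    (hd : ∀ s : ℂ, σ₁ ≤ s.re → s.re ≤ σ₂ → DifferentiableAt ℂ Φ s)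
    (hb : ∀ s : ℂ, σ₁ ≤ s.re → s.re ≤ σ₂ → ‖Φ s‖ ≤ C * (1 + |s.im|) ^ (-(3 / 2) : ℝ)) :
    ∫ t : ℝ, Φ (σ₁ + t * I) = ∫ t : ℝ, Φ (σ₂ + t * I) := by
  have hi : ∀ σ, σ₁ ≤ σ → σ ≤ σ₂ → Integrable fun t : ℝ => Φ (σ + t * I) := fun σ h1 h2 =>
    integrable_vertical (C := C) (fun t => hd _ (by simpa using h1) (by simpa using h2))
      (fun t => by simpa using hb (σ + t * I) (by simpa using h1) (by simpa using h2))
  have hlim : ∀ σ, σ₁ ≤ σ → σ ≤ σ₂ → Tendsto (fun T : ℝ => ∫ t in (-T)..T, Φ (σ + t * I)) atTop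
      (𝓝 (∫ t : ℝ, Φ (σ + t * I))) := fun σ h1 h2 =>
    intervalIntegral_tendsto_integral (hi σ h1 h2) tendsto_neg_atTop_atBot tendsto_id
  have hdecay : Tendsto (fun T : ℝ => C * (1 + |T|) ^ (-(3 / 2) : ℝ) * |σ₂ - σ₁|) atTop (𝓝 0) := by
    have h1 : Tendsto (fun T : ℝ => (1 + |T|) ^ (-(3 / 2) : ℝ)) atTop (𝓝 0) :=
      (tendsto_rpow_neg_atTop (by norm_num)).comp
        (tendsto_atTop_add_const_left _ _ tendsto_abs_atTop_atTop)
    simpa using (h1.const_mul C).mul_const |σ₂ - σ₁|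
  have hhor : ∀ ε : ℝ, |ε| = 1 →
      Tendsto (fun T : ℝ => ∫ x in σ₁..σ₂, Φ (x + (ε * T : ℝ) * I)) atTop (𝓝 0) := by
    intro ε hε
    refine squeeze_zero_norm (fun T => ?_) hdecay
    refine intervalIntegral.norm_integral_le_of_norm_le_const fun x hx => ?_
    rw [uIoc_of_le hσ] at hx
    refine (hb _ (by simpa using hx.1.le) (by simpa using hx.2)).trans_eq ?_
    simp [abs_mul, hε]
  have hrect : ∀ T : ℝ, (∫ x in σ₁..σ₂, Φ (x + (-1 * T : ℝ) * I))
      - (∫ x in σ₁..σ₂, Φ (x + (1 * T : ℝ) * I))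
      + I • (∫ t in (-T)..T, Φ (σ₂ + t * I)) - I • (∫ t in (-T)..T, Φ (σ₁ + t * I)) = 0 := by
    intro T
    have := Complex.integral_boundary_rect_eq_zero_of_differentiableOn Φ (σ₁ + (-T : ℝ) * I)
      (σ₂ + T * I) (fun s hs => by
        rw [mem_reProdIm] at hs
        have h1 : s.re ∈ Icc σ₁ σ₂ := by
          have := hs.1
          rw [uIcc_of_le (by simpa using hσ)] at this
          simpa using this
        exact (hd s h1.1 h1.2).differentiableWithinAt)
    simpa using this
  have hl := (((hhor (-1) (by simp)).sub (hhor 1 (by simp))).add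
    ((hlim σ₂ hσ le_rfl).const_smul I)).sub ((hlim σ₁ le_rfl hσ).const_smul I)
  simp_rw [hrect] at hl
  have h0 := tendsto_nhds_unique hl tendsto_const_nhds
  rw [sub_zero, zero_add, ← smul_sub, smul_eq_zero_iff_right I_ne_zero] at h0
  exact (sub_eq_zero.mp h0).symm

end ContourShift

section LogDeriv

open Complex MeasureTheory Set Filter Topology
variable {q : ℕ} [NeZero q]

lemma one_le_natCast_of_neZero (q : ℕ) [NeZero q] : (1 : ℝ) ≤ q := by
  exact_mod_cast Nat.one_le_iff_ne_zero.mpr (NeZero.ne q)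

lemma exists_logDeriv_regL_sub_sum_le {χ : DirichletCharacter ℂ q}
    (hχ : ∀ s : ℂ, 0 < s.re → regL χ s = 0 → s.re = 1 / 2) (t₀ : ℝ) :
    ∃ n : ℕ, (n : ℝ) ≤ 180 * Real.log (q * (|t₀| + 5)) ∧ ∃ ρ : Fin n → ℂ,
      (∀ i, (ρ i).re = 1 / 2) ∧ ∀ z : ℂ, ‖z - (2 + t₀ * I)‖ ≤ 8 / 5 → 1 / 2 < z.re →
        ‖logDeriv (regL χ) z - ∑ i, 1 / (z - ρ i)‖ ≤ 7500 * Real.log (q * (|t₀| + 5)) := by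
  set c : ℂ := 2 + t₀ * I with hc
  have hcre : c.re = 2 := by simp [hc]
  have hcim : c.im = t₀ := by simp [hc]
  have hq := one_le_natCast_of_neZero q
  have hlog : 1 ≤ Real.log (q * (|t₀| + 5)) := by
    rw [Real.le_log_iff_exp_le (by positivity)]
    have := Real.exp_one_lt_d9
    nlinarith [abs_nonneg t₀]
  obtain ⟨n, hn, ρ, hρ, h⟩ := exists_norm_logDeriv_sub_sum_le (differentiable_regL χ) c
    (M := 5 * Real.log (q * (|t₀| + 5))) (by linarith)
    (regL_ne_zero_of_one_le_re χ (by rw [hcre]; norm_num)) (fun z hz => by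
      have := norm_regL_le_mul_exp χ hcre hz
      rwa [hcim] at this)
  refine ⟨n, by linarith, ρ, fun i => hχ _ ?_ (hρ i).2, fun z hz hz2 => ?_⟩
  · have := (abs_re_le_norm (ρ i - c)).trans (hρ i).1
    rw [sub_re, hcre, abs_le] at this
    linarith
  · refine (h z hz fun h0 => ?_).trans (by linarith)
    have := hχ z (by linarith) h0
    linarith

lemma norm_logDeriv_regL_le {χ : DirichletCharacter ℂ q}
    (hχ : ∀ s : ℂ, 0 < s.re → regL χ s = 0 → s.re = 1 / 2) {ε : ℝ} (hε : 0 < ε) {s : ℂ}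
    (hs : 1 / 2 + ε ≤ s.re) (hs2 : s.re ≤ 2) :
    ‖logDeriv (regL χ) s‖ ≤ (180 / ε + 7500) * Real.log (q * (|s.im| + 5)) := by
  obtain ⟨n, hn, ρ, hρ, h⟩ := exists_logDeriv_regL_sub_sum_le hχ s.im
  have h1 : ‖s - (2 + s.im * I)‖ ≤ 8 / 5 := by
    have : s - (2 + s.im * I) = ((s.re - 2 : ℝ) : ℂ) := by
      apply Complex.ext <;> simp
    rw [this, norm_real, Real.norm_eq_abs, abs_le]
    constructor <;> linarith
  have h2 := h s h1 (by linarith)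
  have h3 : ‖∑ i, 1 / (s - ρ i)‖ ≤ n * (1 / ε) := by
    have h4 : ∀ i ∈ Finset.univ, ‖1 / (s - ρ i)‖ ≤ 1 / ε := fun i _ => ?_
    · exact (norm_sum_le_of_le _ h4).trans_eq (by simp)
    rw [norm_div, norm_one]
    refine one_div_le_one_div_of_le hε ?_
    refine le_trans ?_ (re_le_norm _)
    rw [sub_re, hρ i]; linarith
  have h4 := norm_le_norm_add_norm_sub' (logDeriv (regL χ) s) (∑ i, 1 / (s - ρ i))
  have h5 : (n : ℝ) * (1 / ε) ≤ 180 * Real.log (q * (|s.im| + 5)) * (1 / ε) := by gcongr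
  rw [add_mul]
  have : 180 / ε * Real.log (q * (|s.im| + 5)) = 180 * Real.log (q * (|s.im| + 5)) * (1 / ε) := by
    ring
  linarith

lemma log_mul_add_five_le (t : ℝ) :
    Real.log (q * (|t| + 5)) ≤ 2 * √(5 * q) * (1 + |t|) ^ (1 / 2 : ℝ) := by
  have hq := one_le_natCast_of_neZero q
  have ht := abs_nonneg t
  have h1 : Real.log (q * (|t| + 5)) ≤ Real.log (5 * q * (1 + |t|)) := by
    apply Real.log_le_log (by positivity); nlinarith
  have h2 : Real.log (5 * q * (1 + |t|)) = 2 * Real.log (√(5 * q * (1 + |t|))) := by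
    rw [Real.log_sqrt (by positivity)]; ring
  have h3 := Real.log_le_sub_one_of_pos (x := √(5 * q * (1 + |t|))) (by positivity)
  rw [← Real.sqrt_eq_rpow, mul_assoc, ← Real.sqrt_mul (by positivity)]
  linarith

lemma differentiableAt_logDeriv_regL {χ : DirichletCharacter ℂ q}
    (hχ : ∀ s : ℂ, 0 < s.re → regL χ s = 0 → s.re = 1 / 2) {s : ℂ} (hs : 1 / 2 < s.re) :
    DifferentiableAt ℂ (logDeriv (regL χ)) s := by
  unfold logDeriv
  refine ((differentiable_regL χ).deriv s).div (differentiable_regL χ s) fun h => ?_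
  have := hχ s (by linarith) h
  linarith

lemma integral_poisson_le {ε : ℝ} (hε : 0 < ε) (γ a b : ℝ) (hab : a ≤ b) :
    ∫ t in a..b, ε / (ε ^ 2 + (t - γ) ^ 2) ≤ Real.pi := by
  have hi : Integrable fun t : ℝ => (1 / ε) * (1 + ((t - γ) / ε) ^ 2)⁻¹ :=
    ((integrable_inv_one_add_sq.comp_div hε.ne').comp_sub_right γ).const_mul _
  have heq : (fun t : ℝ => ε / (ε ^ 2 + (t - γ) ^ 2))
      = fun t : ℝ => (1 / ε) * (1 + ((t - γ) / ε) ^ 2)⁻¹ := by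
    ext t; field_simp
  rw [heq, intervalIntegral.integral_of_le hab]
  refine (setIntegral_le_integral hi (ae_of_all _ fun t => by positivity)).trans_eq ?_
  rw [integral_const_mul,
    integral_sub_right_eq_self (fun t : ℝ => (1 + (t / ε) ^ 2)⁻¹) γ,
    Measure.integral_comp_div (fun t : ℝ => (1 + t ^ 2)⁻¹) ε, integral_univ_inv_one_add_sq,
    abs_of_pos hε, smul_eq_mul]
  field_simp

lemma integral_abs_re_logDeriv_regL_le {χ : DirichletCharacter ℂ q}
    (hχ : ∀ s : ℂ, 0 < s.re → regL χ s = 0 → s.re = 1 / 2) {ε : ℝ} (hε : 0 < ε) (hε1 : ε ≤ 1 / 2)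
    (t₀ : ℝ) :
    ∫ t in (t₀ - 1 / 2)..(t₀ + 1 / 2), |(logDeriv (regL χ) ((1 / 2 + ε : ℝ) + t * I)).re|
      ≤ 8100 * Real.log (q * (|t₀| + 5)) := by
  obtain ⟨n, hn, ρ, hρ, h⟩ := exists_logDeriv_regL_sub_sum_le hχ t₀
  set M := Real.log (q * (|t₀| + 5)) with hM
  have hre : ∀ (t : ℝ) i, (1 / (((1 / 2 + ε : ℝ) : ℂ) + t * I - ρ i)).re
      = ε / (ε ^ 2 + (t - (ρ i).im) ^ 2) := by
    intro t i
    rw [one_div, inv_re, normSq_apply]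
    simp only [sub_re, add_re, ofReal_re, mul_re, I_re, I_im, ofReal_im, sub_im, add_im, mul_im,
      hρ i]
    congr 1 <;> ring
  have hcont : ∀ i, Continuous fun t : ℝ => ε / (ε ^ 2 + (t - (ρ i).im) ^ 2) := fun i =>
    continuous_const.div (by fun_prop) fun t => by positivity
  have hpt : ∀ t ∈ Icc (t₀ - 1 / 2) (t₀ + 1 / 2),
      |(logDeriv (regL χ) ((1 / 2 + ε : ℝ) + t * I)).re|
        ≤ ∑ i, ε / (ε ^ 2 + (t - (ρ i).im) ^ 2) + 7500 * M := by
    intro t ht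
    set z : ℂ := ((1 / 2 + ε : ℝ) : ℂ) + t * I with hz
    have h1 : ‖z - (2 + t₀ * I)‖ ≤ 8 / 5 := by
      have : z - (2 + t₀ * I) = ((ε - 3 / 2 : ℝ) : ℂ) + ((t - t₀ : ℝ) : ℂ) * I := by
        rw [hz]; push_cast; ring
      refine abs_le_of_sq_le_sq' ?_ (by norm_num) |>.2
      rw [this, norm_add_mul_I_sq]
      have h2 : (t - t₀) ^ 2 ≤ (1 / 2) ^ 2 := sq_le_sq' (by linarith [ht.1]) (by linarith [ht.2])
      nlinarith
    have h2 := (abs_re_le_norm _).trans (h z h1 (by simp [hz]; linarith))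
    rw [sub_re, re_sum] at h2
    simp_rw [hz, hre] at h2
    have h3 : 0 ≤ ∑ i, ε / (ε ^ 2 + (t - (ρ i).im) ^ 2) :=
      Finset.sum_nonneg fun i _ => by positivity
    rw [abs_le] at h2 ⊢
    constructor <;> linarith [h2.1, h2.2]
  have hinteg : IntervalIntegrable
      (fun t : ℝ => |(logDeriv (regL χ) ((1 / 2 + ε : ℝ) + t * I)).re|) volume
      (t₀ - 1 / 2) (t₀ + 1 / 2) := by
    refine Continuous.intervalIntegrable (continuous_iff_continuousAt.mpr fun t => ?_) _ _
    refine ContinuousAt.abs (continuous_re.continuousAt.comp ?_)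
    exact ContinuousAt.comp (f := fun t : ℝ => (((1 / 2 + ε : ℝ) : ℂ) + t * I))
      (differentiableAt_logDeriv_regL hχ (by simpa using hε)).continuousAt (by fun_prop)
  have hinteg2 : ∀ i, IntervalIntegrable (fun t : ℝ => ε / (ε ^ 2 + (t - (ρ i).im) ^ 2)) volume
      (t₀ - 1 / 2) (t₀ + 1 / 2) := fun i => (hcont i).intervalIntegrable _ _
  calc _ ≤ ∫ t in (t₀ - 1 / 2)..(t₀ + 1 / 2),
        (∑ i, ε / (ε ^ 2 + (t - (ρ i).im) ^ 2) + 7500 * M) := by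
        refine intervalIntegral.integral_mono_on (by linarith) hinteg ?_ hpt
        refine Continuous.intervalIntegrable ?_ _ _
        exact (continuous_finsetSum _ fun i _ => hcont i).add continuous_const
    _ = ∑ i, (∫ t in (t₀ - 1 / 2)..(t₀ + 1 / 2), ε / (ε ^ 2 + (t - (ρ i).im) ^ 2)) + 7500 * M := by
        rw [intervalIntegral.integral_add, intervalIntegral.integral_finsetSum]
        · simp; ring
        · exact fun i _ => hinteg2 i
        · exact Continuous.intervalIntegrable (continuous_finsetSum _ fun i _ => hcont i) _ _
        · simp
    _ ≤ n * Real.pi + 7500 * M := by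
        gcongr
        refine (Finset.sum_le_sum fun i _ => integral_poisson_le hε _ _ _ (by linarith)).trans ?_
        simp
    _ ≤ _ := by nlinarith [Real.pi_lt_d2, Real.pi_pos, (Nat.cast_nonneg n : (0 : ℝ) ≤ n)]

end LogDeriv

section DiffKernel

open Complex MeasureTheory Set Filter Topology

/-- The difference quotient of `rieszKernel` in its first argument. -/
noncomputable def diffKernel (y h : ℝ) (s : ℂ) : ℂ :=
  (rieszKernel (y + h) s - rieszKernel y s) / h

lemma differentiableAt_rieszKernel {y : ℝ} (hy : 0 < y) {s : ℂ} (hs : 0 < s.re) :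
    DifferentiableAt ℂ (rieszKernel y) s := by
  have h0 : s ≠ 0 := by rintro rfl; simp at hs
  have h1 : s + 1 ≠ 0 := fun h => by have := congrArg re h; simp at this; linarith
  have hy0 : (y : ℂ) ≠ 0 := by exact_mod_cast hy.ne'
  refine DifferentiableAt.div ?_ (by fun_prop) (mul_ne_zero h0 h1)
  exact DifferentiableAt.const_cpow (by fun_prop) (.inl hy0)

variable {y h X : ℝ} {s : ℂ}

lemma differentiableAt_diffKernel (hy : 0 < y) (hh : 0 < h) (hs : 0 < s.re) :
    DifferentiableAt ℂ (diffKernel y h) s :=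
  ((differentiableAt_rieszKernel (by linarith) hs).sub
    (differentiableAt_rieszKernel hy hs)).div_const _

lemma norm_diffKernel_le_div_mul (hy : 0 < y) (hh : 0 < h) (hX : y + h ≤ X) (hs : 0 < s.re) :
    ‖diffKernel y h s‖ ≤ 2 * X ^ (s.re + 1) / (h * (‖s‖ * ‖s + 1‖)) := by
  have h1 : ∀ y, 0 < y → y ≤ X → ‖rieszKernel y s‖ ≤ X ^ (s.re + 1) / (‖s‖ * ‖s + 1‖) := by
    intro y hy hyX
    rw [norm_rieszKernel hy]
    gcongr
  rw [diffKernel, norm_div, norm_real, Real.norm_of_nonneg hh.le]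
  calc _ ≤ (X ^ (s.re + 1) / (‖s‖ * ‖s + 1‖) + X ^ (s.re + 1) / (‖s‖ * ‖s + 1‖)) / h := by
        gcongr
        exact (norm_sub_le _ _).trans (add_le_add (h1 _ (by linarith) hX) (h1 _ hy (by linarith)))
    _ = _ := by
        rw [← two_mul, ← mul_div_assoc, div_div, mul_comm h]

lemma norm_diffKernel_le_div (hy : 0 < y) (hh : 0 < h) (hX : y + h ≤ X) (hs : 0 < s.re) :
    ‖diffKernel y h s‖ ≤ X ^ s.re / ‖s‖ := by
  have h0 : s ≠ 0 := by rintro rfl; simp at hs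
  have h1 : s + 1 ≠ 0 := fun h => by have := congrArg re h; simp at this; linarith
  have hd : ∀ u ∈ Icc y (y + h),
      HasDerivWithinAt (fun u : ℝ => rieszKernel u s) ((u : ℂ) ^ s / s) (Icc y (y + h)) u := by
    intro u hu
    have hu0 : u ≠ 0 := by linarith [hu.1]
    have h2 := (hasDerivAt_ofReal_cpow_const hu0 h1).div_const (s * (s + 1))
    refine (h2.congr_deriv ?_).hasDerivWithinAt
    rw [add_sub_cancel_right]
    field_simp
  have h3 := (convex_Icc y (y + h)).norm_image_sub_le_of_norm_hasDerivWithin_le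
    (C := X ^ s.re / ‖s‖) hd (fun u hu => by
      rw [norm_div, norm_cpow_eq_rpow_re_of_pos (by linarith [hu.1])]
      gcongr
      · linarith [hu.1]
      · linarith [hu.2]) (left_mem_Icc.mpr (by linarith)) (right_mem_Icc.mpr (by linarith))
  rw [diffKernel, norm_div, norm_real, Real.norm_of_nonneg hh.le, div_le_iff₀ hh]
  simpa [abs_of_pos hh] using h3

lemma mul_one_add_sq_le_norm_mul {ε : ℝ} (hε : 0 < ε) (hε1 : ε ≤ 1) (hs : ε ≤ s.re) :
    ε * (1 + s.im ^ 2) ≤ ‖s‖ * ‖s + 1‖ := by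
  refine abs_le_of_sq_le_sq' ?_ (by positivity) |>.2
  rw [mul_pow, mul_pow, ← normSq_eq_norm_sq, ← normSq_eq_norm_sq, normSq_apply, normSq_apply,
    sq (1 + _)]
  simp only [add_re, one_re, add_im, one_im, add_zero]
  have h1 : ε ^ 2 * (1 + s.im ^ 2) ≤ s.re * s.re + s.im * s.im := by
    have : ε ^ 2 ≤ s.re * s.re := by nlinarith
    have h0 : 0 ≤ 1 - ε ^ 2 := by nlinarith
    nlinarith [mul_nonneg h0 (sq_nonneg s.im)]
  have h2 : 1 + s.im ^ 2 ≤ (s.re + 1) * (s.re + 1) + s.im * s.im := by nlinarith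
  rw [← mul_assoc]
  exact mul_le_mul h1 h2 (by positivity) (by nlinarith [sq_nonneg s.im])

lemma norm_diffKernel_le_rpow (hy : 0 < y) (hh : 0 < h) (hX : y + h ≤ X) (hX1 : 1 ≤ X)
    {ε : ℝ} (hε : 0 < ε) (hε1 : ε ≤ 1) (hs : ε ≤ s.re) (hs2 : s.re ≤ 2) :
    ‖diffKernel y h s‖ ≤ 4 * X ^ (3 : ℝ) / (h * ε) * (1 + |s.im|) ^ (-2 : ℝ) := by
  refine (norm_diffKernel_le_div_mul hy hh hX (by linarith)).trans ?_
  have h1 := mul_one_add_sq_le_norm_mul hε hε1 hs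
  have h2 : (1 + |s.im|) ^ 2 ≤ 2 * (1 + s.im ^ 2) := by
    nlinarith [sq_nonneg (1 - |s.im|), sq_abs s.im]
  have h3 : 0 < 1 + |s.im| := by positivity
  rw [Real.rpow_neg h3.le, Real.rpow_two]
  rw [← div_eq_mul_inv, div_div]
  have h4 : 4 * X ^ (3 : ℝ) / (h * ε * (1 + |s.im|) ^ 2)
      = 2 * X ^ (3 : ℝ) / (h * (ε * ((1 + |s.im|) ^ 2 / 2))) := by
    field_simp; norm_num
  rw [h4]
  have h5 : ε * ((1 + |s.im|) ^ 2 / 2) ≤ ‖s‖ * ‖s + 1‖ := le_trans (by gcongr; linarith) h1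
  gcongr
  linarith

section Parameters
variable {x ε : ℝ}

lemma eps_bounds (hx : 8 ≤ x) (hε : ε * Real.log x = 1) :
    0 < ε ∧ ε ≤ 1 / 2 ∧ x ^ ε = Real.exp 1 := by
  have h1 : 2 ≤ Real.log x := by
    have h2 : Real.log 8 ≤ Real.log x := Real.log_le_log (by norm_num) hx
    have h3 : Real.log 8 = 3 * Real.log 2 := by
      rw [show (8 : ℝ) = 2 ^ 3 by norm_num, Real.log_pow]; norm_num
    linarith [Real.log_two_gt_d9]
  have h2 : 0 < ε := by
    by_contra h
    nlinarith
  refine ⟨h2, by nlinarith, ?_⟩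
  rw [Real.rpow_def_of_pos (by linarith), mul_comm, hε]

lemma two_mul_rpow_le {x ε a : ℝ} (hx : 8 ≤ x) (hε : ε * Real.log x = 1) :
    (2 * x) ^ (a + ε) ≤ 2 ^ (a + 1) * x ^ a * 3 := by
  obtain ⟨h1, h2, h3⟩ := eps_bounds hx hε
  rw [Real.mul_rpow (by norm_num) (by linarith), Real.rpow_add (by linarith : 0 < x), h3,
    mul_assoc]
  gcongr
  · norm_num
  · linarith
  · linarith [Real.exp_one_lt_d9]

lemma norm_diffKernel_half_le (hx : 8 ≤ x) (hε : ε * Real.log x = 1) (hy : 0 < y)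
    (hyx : y + √x ≤ 2 * x) (hs : s.re = 1 / 2 + ε) :
    ‖diffKernel y (√x) s‖ ≤ 1000 * √x * (1 + |s.im|) ^ (-(1 + ε)) := by
  obtain ⟨h1, h2, h3⟩ := eps_bounds hx hε
  have hx0 : 0 < x := by linarith
  have hh : 0 < √x := Real.sqrt_pos.mpr hx0
  have hhx : √x * √x = x := Real.mul_self_sqrt hx0.le
  set τ := 1 + |s.im| with hτ
  have hτ1 : 1 ≤ τ := by rw [hτ]; linarith [abs_nonneg s.im]
  have hsτ : τ / 3 ≤ ‖s‖ := by
    have h4 := abs_im_le_norm s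
    have h5 := re_le_norm s
    rw [hs] at h5
    rw [hτ]
    linarith
  have hsp : 0 < s.re := by linarith
  have h23 : (2 : ℝ) ^ (1 / 2 + 1 : ℝ) ≤ 3 := by
    rw [show (2 : ℝ) ^ (1 / 2 + 1 : ℝ) = √2 * 2 by
      rw [Real.rpow_add (by norm_num), Real.sqrt_eq_rpow, Real.rpow_one]]
    have := Real.sqrt_two_lt_three_halves
    linarith
  have hX : (2 * x) ^ (1 / 2 + ε) ≤ 9 * √x := by
    refine (two_mul_rpow_le hx hε).trans ?_
    rw [← Real.sqrt_eq_rpow]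
    nlinarith
  have hb : ‖diffKernel y (√x) s‖ ≤ 27 * √x / τ := by
    refine (norm_diffKernel_le_div hy hh hyx hsp).trans ?_
    rw [hs]
    calc _ ≤ 9 * √x / (τ / 3) := by gcongr
      _ = _ := by field_simp; norm_num
  have ha : ‖diffKernel y (√x) s‖ ≤ 324 * x / τ ^ 2 := by
    refine (norm_diffKernel_le_div_mul hy hh hyx hsp).trans ?_
    have h6 : ‖s‖ ≤ ‖s + 1‖ := by
      have := norm_add_mul_I_le_add_one hsp.le s.im
      rwa [re_add_im] at this
    have h7 : (2 * x) ^ (s.re + 1) ≤ 18 * x * √x := by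
      rw [hs, Real.rpow_add (by linarith), Real.rpow_one]
      nlinarith
    calc _ ≤ 2 * (18 * x * √x) / (√x * (τ / 3 * (τ / 3))) := by
          gcongr
          exact hsτ.trans h6
      _ = _ := by field_simp; norm_num
  have hτ0 : 0 < τ := by linarith
  rcases le_or_gt τ x with h | h
  · refine hb.trans ?_
    have h8 : τ ^ ε ≤ 3 := by
      refine (Real.rpow_le_rpow hτ0.le h h1.le).trans ?_
      rw [h3]; linarith [Real.exp_one_lt_d9]
    rw [Real.rpow_neg hτ0.le, Real.rpow_add hτ0, Real.rpow_one, ← div_eq_mul_inv,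
      div_le_div_iff₀ hτ0 (by positivity)]
    have : 0 ≤ √x * τ := by positivity
    nlinarith [mul_le_mul_of_nonneg_left h8 this]
  · refine ha.trans ?_
    rw [Real.rpow_neg hτ0.le, ← div_eq_mul_inv, div_le_div_iff₀ (by positivity) (by positivity)]
    have h9 : √x * τ ^ (1 + ε) ≤ τ ^ 2 := by
      calc _ ≤ τ ^ (1 / 2 : ℝ) * τ ^ (1 + 1 / 2 : ℝ) := by
            rw [← Real.sqrt_eq_rpow]
            gcongr
        _ = _ := by
            rw [← Real.rpow_add hτ0]; norm_num
    have h10 : x * τ ^ (1 + ε) ≤ √x * τ ^ 2 := by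
      calc x * τ ^ (1 + ε) = √x * (√x * τ ^ (1 + ε)) := by rw [← mul_assoc, hhx]
        _ ≤ _ := by gcongr
    nlinarith [mul_nonneg hh.le (sq_nonneg τ)]

lemma norm_diffKernel_eps_le (hx : 8 ≤ x) (hε : ε * Real.log x = 1) (hy : 0 < y)
    (hyx : y + √x ≤ 2 * x) (hs : s.re = ε) :
    ‖diffKernel y (√x) s‖ ≤ 24 * √x / ε * (1 + s.im ^ 2)⁻¹ := by
  obtain ⟨h1, h2, h3⟩ := eps_bounds hx hε
  have hx0 : 0 < x := by linarith
  have hh : 0 < √x := Real.sqrt_pos.mpr hx0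
  have hhx : √x * √x = x := Real.mul_self_sqrt hx0.le
  refine (norm_diffKernel_le_div_mul hy hh hyx (by linarith)).trans ?_
  have h4 : (2 * x) ^ (s.re + 1) ≤ 12 * x := by
    rw [hs, add_comm]
    refine (two_mul_rpow_le hx hε).trans_eq ?_
    rw [Real.rpow_one]; norm_num; ring
  have h5 := mul_one_add_sq_le_norm_mul h1 (by linarith) hs.ge
  calc _ ≤ 2 * (12 * x) / (√x * (ε * (1 + s.im ^ 2))) := by gcongr
    _ = _ := by
      nth_rewrite 1 [← hhx]
      field_simp; norm_num

end Parameters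

end DiffKernel

section WeightedIntegral

open Complex MeasureTheory Set Filter Topology

lemma sum_range_rpow_neg_le {δ : ℝ} (hδ : 0 < δ) (N : ℕ) :
    ∑ k ∈ Finset.range N, ((k : ℝ) + 1) ^ (-(1 + δ)) ≤ 1 + 1 / δ := by
  cases N with
  | zero => simp; positivity
  | succ N =>
    rw [Finset.sum_range_succ']
    simp only [CharP.cast_eq_zero, zero_add, Real.one_rpow]
    have h1 : AntitoneOn (fun u : ℝ => u ^ (-(1 + δ))) (Icc 1 (1 + N)) := by
      intro u hu v hv huv
      exact Real.rpow_le_rpow_of_nonpos (by linarith [hu.1]) huv (by linarith)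
    have h2 := h1.sum_le_integral
    have h3 : ∑ k ∈ Finset.range N, (((k + 1 : ℕ) : ℝ) + 1) ^ (-(1 + δ))
        = ∑ k ∈ Finset.range N, (1 + ((k + 1 : ℕ) : ℝ)) ^ (-(1 + δ)) := by
      simp_rw [add_comm]
    have hN : (0 : ℝ) < 1 + N := by positivity
    rw [integral_rpow (.inr ⟨by linarith, by
      rw [uIcc_of_le (by linarith)]; intro h; linarith [h.1]⟩), Real.one_rpow] at h2
    have h4 : ((1 + N : ℝ) ^ (-(1 + δ) + 1) - 1) / (-(1 + δ) + 1) ≤ 1 / δ := by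
      rw [show -(1 + δ) + 1 = -δ by ring, div_neg, ← neg_div, neg_sub]
      gcongr
      have : 0 ≤ (1 + N : ℝ) ^ (-δ) := by positivity
      linarith
    rw [h3]
    linarith

lemma setIntegral_Ioi_le_of_sum_le {F : ℝ → ℝ} (hF : Integrable F) {b : ℕ → ℝ} {S : ℝ}
    (hb : ∀ k : ℕ, ∫ t in (k : ℝ)..((k : ℝ) + 1), F t ≤ b k)
    (hS : ∀ N, ∑ k ∈ Finset.range N, b k ≤ S) : ∫ t in Ioi 0, F t ≤ S := by
  have h1 := intervalIntegral_tendsto_integral_Ioi (0 : ℝ) hF.integrableOn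
    tendsto_natCast_atTop_atTop
  refine le_of_tendsto' h1 fun N => ?_
  have h2 := intervalIntegral.sum_integral_adjacent_intervals (f := F) (μ := volume)
    (a := fun k : ℕ => (k : ℝ)) (n := N) (fun k _ => hF.intervalIntegrable)
  rw [Nat.cast_zero] at h2
  rw [← h2]
  refine (Finset.sum_le_sum fun k _ => ?_).trans (hS N)
  push_cast
  exact hb k

lemma integral_mul_le_of_window {w g : ℝ → ℝ} {A ε Q B : ℝ} (hA : 0 ≤ A) (hε : 0 < ε)
    (hε1 : ε ≤ 1 / 2) (hQ : 1 ≤ Q) (hB : 0 ≤ B) (hwc : Continuous w) (hgc : Continuous g)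
    (hg0 : ∀ t, 0 ≤ g t)
    (hw : ∀ t, w t ≤ A * (1 + |t|) ^ (-(1 + ε)))
    (hg : ∀ t₀ : ℝ, ∫ t in (t₀ - 1 / 2)..(t₀ + 1 / 2), g t ≤ B * Real.log (Q * (|t₀| + 5)))
    (hi : Integrable fun t => w t * g t) :
    ∫ t, w t * g t ≤ 12 * A * B * (1 / ε) * (Real.log (6 * Q) + 1 / ε) := by
  set b : ℕ → ℝ := fun k => A * B * (Real.log (6 * Q) * ((k : ℝ) + 1) ^ (-(1 + ε))
    + 2 / ε * ((k : ℝ) + 1) ^ (-(1 + ε / 2))) with hb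
  have hlogQ : 0 ≤ Real.log (6 * Q) := Real.log_nonneg (by linarith)
  have hS : ∀ N, ∑ k ∈ Finset.range N, b k
      ≤ 6 * A * B * (1 / ε) * (Real.log (6 * Q) + 1 / ε) := by
    intro N
    rw [hb]
    simp only
    rw [← Finset.mul_sum, Finset.sum_add_distrib, ← Finset.mul_sum, ← Finset.mul_sum]
    have h1 := sum_range_rpow_neg_le hε N
    have h2 := sum_range_rpow_neg_le (half_pos hε) N
    have h3 : 1 ≤ 1 / ε := by rw [le_div_iff₀ hε]; linarith
    have h4 : 1 / (ε / 2) = 2 * (1 / ε) := by field_simp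
    rw [h4] at h2
    set E := 1 / ε with hE
    rw [show 2 / ε = 2 * E by rw [hE]; ring]
    calc _ ≤ A * B * (Real.log (6 * Q) * (1 + E) + 2 * E * (1 + 2 * E)) := by gcongr
      _ ≤ A * B * (6 * E * (Real.log (6 * Q) + E)) := by
          refine mul_le_mul_of_nonneg_left ?_ (by positivity)
          nlinarith [mul_nonneg hlogQ (by linarith : 0 ≤ E - 1)]
      _ = _ := by ring
  have hwin : ∀ (k : ℕ) (v h : ℝ → ℝ), Continuous v → Continuous h → (∀ t, 0 ≤ h t) →
      (∀ t, v t ≤ A * (1 + |t|) ^ (-(1 + ε))) →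
      (∫ t in (k : ℝ)..((k : ℝ) + 1), h t ≤ B * Real.log (Q * (|(k : ℝ) + 1 / 2| + 5))) →
      ∫ t in (k : ℝ)..((k : ℝ) + 1), v t * h t ≤ b k := by
    intro k v h hvc hhc hh0 hv hh
    have hk : (0 : ℝ) < (k : ℝ) + 1 := by positivity
    have h1 : ∫ t in (k : ℝ)..((k : ℝ) + 1), v t * h t
        ≤ ∫ t in (k : ℝ)..((k : ℝ) + 1), A * ((k : ℝ) + 1) ^ (-(1 + ε)) * h t := by
      refine intervalIntegral.integral_mono_on (by linarith)
        ((hvc.mul hhc).intervalIntegrable _ _)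
        ((continuous_const.mul hhc).intervalIntegrable _ _) fun t ht => ?_
      refine mul_le_mul_of_nonneg_right ((hv t).trans ?_) (hh0 t)
      refine mul_le_mul_of_nonneg_left ?_ hA
      refine Real.rpow_le_rpow_of_nonpos hk ?_ (by linarith)
      linarith [ht.1, le_abs_self t]
    rw [intervalIntegral.integral_const_mul] at h1
    have h2 : Real.log (Q * (|(k : ℝ) + 1 / 2| + 5))
        ≤ Real.log (6 * Q) + 2 / ε * ((k : ℝ) + 1) ^ (ε / 2) := by
      have h3 : Real.log (Q * (|(k : ℝ) + 1 / 2| + 5)) ≤ Real.log (6 * Q * ((k : ℝ) + 1)) := by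
        apply Real.log_le_log (by positivity)
        rw [abs_of_pos (by positivity)]
        have : (0 : ℝ) ≤ k := by positivity
        nlinarith
      rw [Real.log_mul (by positivity) hk.ne'] at h3
      have h4 := Real.log_le_rpow_div hk.le (half_pos hε)
      rw [show ((k : ℝ) + 1) ^ (ε / 2) / (ε / 2) = 2 / ε * ((k : ℝ) + 1) ^ (ε / 2) by
        field_simp] at h4
      linarith
    have h5 : ((k : ℝ) + 1) ^ (-(1 + ε / 2))
        = ((k : ℝ) + 1) ^ (-(1 + ε)) * ((k : ℝ) + 1) ^ (ε / 2) := by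
      rw [← Real.rpow_add hk]; congr 1; ring
    refine h1.trans ?_
    calc _ ≤ A * ((k : ℝ) + 1) ^ (-(1 + ε)) *
          (B * (Real.log (6 * Q) + 2 / ε * ((k : ℝ) + 1) ^ (ε / 2))) := by
          refine mul_le_mul_of_nonneg_left (hh.trans ?_) (by positivity)
          gcongr
      _ = b k := by rw [hb]; simp only; rw [h5]; ring
  have hpos : ∫ t in Ioi 0, w t * g t ≤ 6 * A * B * (1 / ε) * (Real.log (6 * Q) + 1 / ε) := by
    refine setIntegral_Ioi_le_of_sum_le hi (fun k => hwin k w g hwc hgc hg0 hw ?_) hS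
    have := hg (k + 1 / 2)
    rwa [add_sub_cancel_right, add_assoc, add_halves] at this
  have hneg : ∫ t in Ioi 0, w (-t) * g (-t)
      ≤ 6 * A * B * (1 / ε) * (Real.log (6 * Q) + 1 / ε) := by
    refine setIntegral_Ioi_le_of_sum_le hi.comp_neg (fun k => hwin k (fun t => w (-t))
      (fun t => g (-t)) (by fun_prop) (by fun_prop) (fun t => hg0 _)
      (fun t => by simpa using hw (-t)) ?_) hS
    have := hg (-(k + 1 / 2))
    rw [abs_neg] at this
    rw [intervalIntegral.integral_comp_neg]
    convert this using 2 <;> ring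
  have hsplit := integral_add_compl (measurableSet_Ioi (a := (0 : ℝ))) hi
  have hc := integral_comp_neg_Ioi (0 : ℝ) (fun t => w t * g t)
  rw [neg_zero] at hc
  rw [compl_Ioi, ← hc] at hsplit
  rw [← hsplit]
  linarith

end WeightedIntegral

section CharacterSum

open Complex MeasureTheory Set Filter Topology ComplexConjugate
open scoped ArithmeticFunction.vonMangoldt

variable {q : ℕ} [NeZero q]

lemma poleOrder_nonneg (χ : DirichletCharacter ℂ q) : 0 ≤ poleOrder χ := by
  unfold poleOrder; split_ifs <;> norm_num

lemma poleOrder_le_one (χ : DirichletCharacter ℂ q) : poleOrder χ ≤ 1 := by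
  unfold poleOrder; split_ifs <;> norm_num

lemma norm_logDeriv_regL_le_of_one_lt (χ : DirichletCharacter ℂ q) {ε B : ℝ} (hε : 0 < ε)
    (hΛ : Summable (fun n : ℕ => Λ n / (n : ℝ) ^ (1 + ε)))
    (hB : ∑' n : ℕ, Λ n / (n : ℝ) ^ (1 + ε) ≤ B / ε) {s : ℂ} (hs : s.re = 1 + ε) :
    ‖logDeriv (regL χ) s‖ ≤ (B + 1) / ε := by
  rw [← norm_neg, neg_logDeriv_regL χ (by linarith), add_div]
  refine (norm_sub_le _ _).trans (add_le_add ?_ ?_)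
  · refine le_trans ?_ hB
    rw [LSeries]
    exact tsum_of_norm_bounded hΛ.hasSum fun n => by
      simpa [hs] using norm_term_twist_vonMangoldt_le χ s n
  · rw [norm_div, norm_real, Real.norm_of_nonneg (poleOrder_nonneg χ)]
    have h1 : ε ≤ ‖s - 1‖ := by
      refine le_trans (le_of_eq ?_) (re_le_norm _); simp [hs]
    have := poleOrder_le_one χ
    gcongr

lemma continuous_vertical_logDeriv_regL {χ : DirichletCharacter ℂ q}
    (hχ : ∀ s : ℂ, 0 < s.re → regL χ s = 0 → s.re = 1 / 2) {σ : ℝ} (hσ : 1 / 2 < σ) :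
    Continuous fun t : ℝ => logDeriv (regL χ) (σ + t * I) :=
  continuous_iff_continuousAt.mpr fun t =>
    ContinuousAt.comp (f := fun t : ℝ => (σ + t * I : ℂ))
      (differentiableAt_logDeriv_regL hχ (by simpa using hσ)).continuousAt (by fun_prop)

lemma continuous_vertical_diffKernel {y h σ : ℝ} (hy : 0 < y) (hh : 0 < h) (hσ : 0 < σ) :
    Continuous fun t : ℝ => diffKernel y h (σ + t * I) :=
  continuous_iff_continuousAt.mpr fun t =>
    ContinuousAt.comp (f := fun t : ℝ => (σ + t * I : ℂ))
      (differentiableAt_diffKernel hy hh (by simpa using hσ)).continuousAt (by fun_prop)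

lemma integrable_rieszKernel_mul_logDeriv {χ : DirichletCharacter ℂ q}
    (hχ : ∀ s : ℂ, 0 < s.re → regL χ s = 0 → s.re = 1 / 2) {c y D : ℝ} (hc : 1 / 2 < c)
    (hy : 0 < y) (hD : ∀ t : ℝ, ‖logDeriv (regL χ) (c + t * I)‖ ≤ D) :
    Integrable fun t : ℝ => rieszKernel y (c + t * I) * logDeriv (regL χ) (c + t * I) :=
  (integrable_rieszKernel (by linarith) hy).mul_bdd (c := D)
    (continuous_vertical_logDeriv_regL hχ hc).aestronglyMeasurable (ae_of_all _ hD)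

lemma hasSum_twist_vonMangoldt_riesz {χ : DirichletCharacter ℂ q}
    (hχ : ∀ s : ℂ, 0 < s.re → regL χ s = 0 → s.re = 1 / 2) {c y D : ℝ} (hc : 1 < c) (hy : 1 ≤ y)
    (hΛ : Summable (fun n : ℕ => Λ n / (n : ℝ) ^ c))
    (hD : ∀ t : ℝ, ‖logDeriv (regL χ) (c + t * I)‖ ≤ D) :
    HasSum (fun n : ℕ => (χ n * (Λ n * max (y - n) 0 : ℝ) : ℂ))
      (-(1 / (2 * Real.pi) *
          ∫ t : ℝ, rieszKernel y (c + t * I) * logDeriv (regL χ) (c + t * I))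
        + poleOrder χ * ((y - 1) ^ 2 / 2)) := by
  have hy0 : 0 < y := by linarith
  have h1 := hasSum_integral_rieszKernel_mul_LSeries χ hc hy0 hΛ
  have hL : ∀ t : ℝ, LSeries ((fun n : ℕ => χ n) * fun n : ℕ => (Λ n : ℂ)) (c + t * I)
      = -logDeriv (regL χ) (c + t * I) + poleOrder χ / ((c + t * I : ℂ) - 1) := by
    intro t
    rw [neg_logDeriv_regL χ (by simpa using hc)]; ring
  have hi1 := integrable_rieszKernel_mul_logDeriv hχ (by linarith) hy0 hD
  have hi2 : Integrable fun t : ℝ => rieszKernel y (c + t * I) / ((c + t * I : ℂ) - 1) := by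
    refine (integrable_rieszKernel (by linarith) hy0).mul_bdd (c := 1 / (c - 1)) ?_
      (ae_of_all _ fun t => ?_)
    · refine Continuous.aestronglyMeasurable (Continuous.inv₀ (by fun_prop) fun t h => ?_)
      have := congrArg re h; simp at this; linarith
    · rw [norm_inv, ← one_div]
      have h2 : c - 1 ≤ ‖(c + t * I : ℂ) - 1‖ := by
        refine le_trans (le_of_eq ?_) (re_le_norm _); simp
      have : 0 < c - 1 := by linarith
      gcongr
  have h2 : (∫ t : ℝ, rieszKernel y (c + t * I) *
      LSeries ((fun n : ℕ => χ n) * fun n : ℕ => (Λ n : ℂ)) (c + t * I))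
      = -(∫ t : ℝ, rieszKernel y (c + t * I) * logDeriv (regL χ) (c + t * I))
        + poleOrder χ * (2 * Real.pi * ((y - 1) ^ 2 / 2)) := by
    have hi3 : Integrable fun t : ℝ =>
        -(rieszKernel y (c + t * I) * logDeriv (regL χ) (c + t * I)) := hi1.neg
    rw [← integral_rieszKernel_div_sub_one hc hy, ← integral_neg, ← integral_const_mul,
      ← integral_add hi3 (hi2.const_mul _)]
    refine integral_congr_ae (ae_of_all _ fun t => ?_)
    simp only [hL]
    ring
  rw [h2] at h1
  have hpi : (Real.pi : ℂ) ≠ 0 := by exact_mod_cast Real.pi_ne_zero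
  have h3 := h1.mul_left (1 / (2 * Real.pi) : ℂ)
  have e : 1 / (2 * Real.pi) * (-(∫ t : ℝ, rieszKernel y (c + t * I) *
      logDeriv (regL χ) (c + t * I)) + poleOrder χ * (2 * Real.pi * ((y - 1) ^ 2 / 2)))
      = -(1 / (2 * Real.pi) *
          ∫ t : ℝ, rieszKernel y (c + t * I) * logDeriv (regL χ) (c + t * I))
        + poleOrder χ * ((y - 1) ^ 2 / 2) := by
    generalize (∫ t : ℝ, rieszKernel y (c + t * I) * logDeriv (regL χ) (c + t * I)) = J
    field_simp
  rw [e] at h3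
  refine h3.congr_fun fun n => ?_
  field_simp

/-- The piecewise linear weight equal to `1` on `n ≤ y` and to `0` on `y + h ≤ n`. -/
noncomputable def trapezoid (y h u : ℝ) : ℝ := (max (y + h - u) 0 - max (y - u) 0) / h

lemma hasSum_twist_vonMangoldt_trapezoid {χ : DirichletCharacter ℂ q}
    (hχ : ∀ s : ℂ, 0 < s.re → regL χ s = 0 → s.re = 1 / 2) {c y h D : ℝ} (hc : 1 < c) (hy : 1 ≤ y)
    (hh : 0 < h) (hΛ : Summable (fun n : ℕ => Λ n / (n : ℝ) ^ c))
    (hD : ∀ t : ℝ, ‖logDeriv (regL χ) (c + t * I)‖ ≤ D) :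
    HasSum (fun n : ℕ => (χ n * (Λ n * trapezoid y h n : ℝ) : ℂ))
      (-(1 / (2 * Real.pi) *
          ∫ t : ℝ, diffKernel y h (c + t * I) * logDeriv (regL χ) (c + t * I))
        + poleOrder χ * ((y - 1 + h / 2 : ℝ) : ℂ)) := by
  have h1 := hasSum_twist_vonMangoldt_riesz hχ hc hy hΛ hD
  have h2 := hasSum_twist_vonMangoldt_riesz hχ hc (by linarith : 1 ≤ y + h) hΛ hD
  have hi1 := integrable_rieszKernel_mul_logDeriv hχ (by linarith) (by linarith : 0 < y) hD
  have hi2 := integrable_rieszKernel_mul_logDeriv hχ (by linarith) (by linarith : 0 < y + h) hD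
  have h3 : (∫ t : ℝ, diffKernel y h (c + t * I) * logDeriv (regL χ) (c + t * I))
      = (1 / h : ℂ) * ((∫ t : ℝ, rieszKernel (y + h) (c + t * I) * logDeriv (regL χ) (c + t * I))
        - ∫ t : ℝ, rieszKernel y (c + t * I) * logDeriv (regL χ) (c + t * I)) := by
    rw [← integral_sub hi2 hi1, ← integral_const_mul]
    refine integral_congr_ae (ae_of_all _ fun t => ?_)
    simp only [diffKernel]; ring
  have hh0 : (h : ℂ) ≠ 0 := by exact_mod_cast hh.ne'
  have h4 := (h2.sub h1).mul_left (1 / h : ℂ)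
  rw [h3]
  have h5 : HasSum (fun n : ℕ => (χ n * (Λ n * trapezoid y h n : ℝ) : ℂ)) _ :=
    h4.congr_fun fun n => by
      simp only [trapezoid]
      push_cast
      field_simp
  convert h5 using 1
  generalize (∫ t : ℝ, rieszKernel y (c + t * I) * logDeriv (regL χ) (c + t * I)) = J₁
  generalize (∫ t : ℝ, rieszKernel (y + h) (c + t * I) * logDeriv (regL χ) (c + t * I)) = J₂
  push_cast
  field_simp
  ring

lemma norm_integral_diffKernel_mul_logDeriv_le {χ : DirichletCharacter ℂ q}
    (hχ : ∀ s : ℂ, 0 < s.re → regL χ s = 0 → s.re = 1 / 2) {x ε y B : ℝ} (hx : 8 ≤ x)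
    (hε : ε * Real.log x = 1) (hy : 0 < y) (hyx : y + √x ≤ 2 * x) (hB0 : 0 < B)
    (hB : ∀ s : ℂ, s.re = 1 + ε → ‖logDeriv (regL χ) s‖ ≤ B / ε) :
    ‖∫ t : ℝ, diffKernel y (√x) ((1 + ε : ℝ) + t * I) * logDeriv (regL χ) ((1 + ε : ℝ) + t * I)‖
      ≤ (2 * 10 ^ 8 + 80 * B) * √x * Real.log x * (Real.log (6 * q) + Real.log x) := by
  obtain ⟨hε0, hε1, hxε⟩ := eps_bounds hx hε
  have hx0 : 0 < x := by linarith
  have hh : 0 < √x := Real.sqrt_pos.mpr hx0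
  have hq := one_le_natCast_of_neZero q
  set K := diffKernel y (√x) with hK
  set G := logDeriv (regL χ) with hG
  set CK := 4 * (2 * x) ^ (3 : ℝ) / (√x * ε) with hCK
  set CG := (180 / ε + 7500) * (2 * √(5 * q)) with hCG
  have hKb : ∀ s : ℂ, ε ≤ s.re → s.re ≤ 2 → ‖K s‖ ≤ CK * (1 + |s.im|) ^ (-2 : ℝ) := fun s h1 h2 =>
    norm_diffKernel_le_rpow hy hh hyx (by linarith) hε0 (by linarith) h1 h2
  have hGb : ∀ s : ℂ, 1 / 2 + ε ≤ s.re → s.re ≤ 2 →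
      ‖G s‖ ≤ CG * (1 + |s.im|) ^ (1 / 2 : ℝ) := by
    intro s h1 h2
    refine (norm_logDeriv_regL_le hχ hε0 h1 h2).trans ?_
    rw [hCG, mul_assoc]
    gcongr
    exact log_mul_add_five_le s.im
  have hprod : ∀ u : ℝ, ∀ a b : ℝ, 0 ≤ b → a ≤ CK * (1 + |u|) ^ (-2 : ℝ) →
      b ≤ CG * (1 + |u|) ^ (1 / 2 : ℝ) → a * b ≤ CK * CG * (1 + |u|) ^ (-(3 / 2) : ℝ) := by
    intro u a b hb h1 h2
    have h3 : 0 < 1 + |u| := by positivity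
    have h4 : (1 + |u|) ^ (-(3 / 2) : ℝ) = (1 + |u|) ^ (-2 : ℝ) * (1 + |u|) ^ (1 / 2 : ℝ) := by
      rw [← Real.rpow_add h3]; norm_num
    rw [h4]
    calc a * b ≤ (CK * (1 + |u|) ^ (-2 : ℝ)) * (CG * (1 + |u|) ^ (1 / 2 : ℝ)) := by gcongr
      _ = _ := by ring
  set σ : ℝ := 1 / 2 + ε with hσ
  have hd1 : ∀ s : ℂ, σ ≤ s.re → s.re ≤ 1 + ε → DifferentiableAt ℂ (fun s => K s * G s) s :=
    fun s h1 h2 => (differentiableAt_diffKernel hy hh (by linarith)).mul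
      (differentiableAt_logDeriv_regL hχ (by linarith))
  have hb1 : ∀ s : ℂ, σ ≤ s.re → s.re ≤ 1 + ε →
      ‖K s * G s‖ ≤ CK * CG * (1 + |s.im|) ^ (-(3 / 2) : ℝ) := fun s h1 h2 => by
    rw [norm_mul]
    exact hprod _ _ _ (norm_nonneg _) (hKb s (by linarith) (by linarith))
      (hGb s (by linarith) (by linarith))
  have hshift1 := integral_vertical_eq (by linarith : σ ≤ 1 + ε) hd1 hb1
  have hd2 : ∀ s : ℂ, σ ≤ s.re → s.re ≤ 1 + ε →
      DifferentiableAt ℂ (fun s => K (2 * σ - s) * conj (G (conj s))) s := fun s h1 h2 => by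
    refine DifferentiableAt.mul ?_ ?_
    · refine DifferentiableAt.comp s (differentiableAt_diffKernel hy hh ?_) (by fun_prop)
      simp; linarith
    · have := (differentiableAt_logDeriv_regL hχ (s := conj s) (by simp; linarith)).conj_conj
      rw [conj_conj] at this
      exact this
  have hb2 : ∀ s : ℂ, σ ≤ s.re → s.re ≤ 1 + ε →
      ‖K (2 * σ - s) * conj (G (conj s))‖ ≤ CK * CG * (1 + |s.im|) ^ (-(3 / 2) : ℝ) :=
    fun s h1 h2 => by
    rw [norm_mul, RCLike.norm_conj]
    refine hprod _ _ _ (norm_nonneg _) ?_ ?_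
    · simpa using hKb (2 * σ - s) (by simp; linarith) (by simp; linarith)
    · simpa using hGb (conj s) (by simp; linarith) (by simp; linarith)
  have hshift2 := integral_vertical_eq (by linarith : σ ≤ 1 + ε) hd2 hb2
  have hi1 : Integrable fun t : ℝ => K (σ + t * I) * G (σ + t * I) :=
    integrable_vertical (Φ := fun s => K s * G s)
      (fun t => hd1 _ (by simp) (by simp; linarith))
      (fun t => by simpa using hb1 (σ + t * I) (by simp) (by simp; linarith))
  have hrefl : ∫ t : ℝ, K (2 * σ - (σ + t * I)) * conj (G (conj (σ + t * I)))
      = ∫ t : ℝ, K (σ + t * I) * conj (G (σ + t * I)) := by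
    rw [← integral_neg_eq_self (fun t : ℝ => K (σ + t * I) * conj (G (σ + t * I)))]
    refine integral_congr_ae (ae_of_all _ fun t => ?_)
    have e1 : (2 * σ - (σ + t * I) : ℂ) = σ + (-t : ℝ) * I := by push_cast; ring
    have e2 : conj (σ + t * I : ℂ) = σ + (-t : ℝ) * I := by simp
    simp only [e1, e2]
  have hIr : ‖∫ t : ℝ, K (σ + t * I) * conj (G (σ + t * I))‖
      ≤ 24 * √x / ε * (B / ε) * Real.pi := by
    rw [← hrefl, hshift2]
    have hbd : ∀ t : ℝ, ‖K (2 * σ - ((1 + ε : ℝ) + t * I)) * conj (G (conj ((1 + ε : ℝ) + t * I)))‖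
        ≤ 24 * √x / ε * (B / ε) * (1 + t ^ 2)⁻¹ := by
      intro t
      rw [norm_mul, RCLike.norm_conj]
      have h1 : ‖K (2 * σ - ((1 + ε : ℝ) + t * I))‖ ≤ 24 * √x / ε * (1 + t ^ 2)⁻¹ := by
        have := norm_diffKernel_eps_le (s := 2 * σ - ((1 + ε : ℝ) + t * I)) hx hε hy hyx
          (by simp [hσ]; ring)
        simpa using this
      have h2 := hB (conj ((1 + ε : ℝ) + t * I)) (by simp)
      calc _ ≤ 24 * √x / ε * (1 + t ^ 2)⁻¹ * (B / ε) := by gcongr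
        _ = _ := by ring
    refine (norm_integral_le_of_norm_le (integrable_inv_one_add_sq.const_mul _)
      (ae_of_all _ hbd)).trans_eq ?_
    rw [integral_const_mul, integral_univ_inv_one_add_sq]
  have hKc := continuous_vertical_diffKernel (σ := σ) hy hh (by linarith)
  have hGc := continuous_vertical_logDeriv_regL hχ (σ := σ) (by linarith)
  have hi2 : Integrable fun t : ℝ => K (σ + t * I) * conj (G (σ + t * I)) := by
    refine hi1.mono (hKc.mul (continuous_conj.comp hGc)).aestronglyMeasurable
      (ae_of_all _ fun t => ?_)
    rw [norm_mul, norm_mul, RCLike.norm_conj]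
  have hsum : ∀ t : ℝ, K (σ + t * I) * G (σ + t * I) + K (σ + t * I) * conj (G (σ + t * I))
      = 2 * (K (σ + t * I) * (G (σ + t * I)).re) := by
    intro t
    rw [← mul_add, add_conj]; push_cast; ring
  have hi3 : Integrable fun t : ℝ => ‖K (σ + t * I)‖ * |(G (σ + t * I)).re| := by
    refine hi1.norm.mono (hKc.norm.mul (continuous_re.comp hGc).abs).aestronglyMeasurable
      (ae_of_all _ fun t => ?_)
    rw [norm_norm, norm_mul, norm_mul, norm_norm, Real.norm_eq_abs, abs_abs]
    gcongr
    exact abs_re_le_norm _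
  have hwin := integral_mul_le_of_window (w := fun t : ℝ => ‖K (σ + t * I)‖)
    (g := fun t : ℝ => |(G (σ + t * I)).re|) (A := 1000 * √x) (ε := ε) (Q := q) (B := 8100)
    (by positivity) hε0 hε1 hq (by norm_num) hKc.norm (continuous_re.comp hGc).abs
    (fun t => abs_nonneg _)
    (fun t => by
      simpa using norm_diffKernel_half_le (s := σ + t * I) hx hε hy hyx (by simp [hσ]))
    (fun t₀ => integral_abs_re_logDeriv_regL_le hχ hε0 hε1 t₀) hi3
  have hadd := integral_add hi1 hi2
  simp_rw [hsum] at hadd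
  rw [integral_const_mul] at hadd
  have hre : ‖∫ t : ℝ, K (σ + t * I) * (G (σ + t * I)).re‖
      ≤ 12 * (1000 * √x) * 8100 * (1 / ε) * (Real.log (6 * q) + 1 / ε) := by
    refine (norm_integral_le_integral_norm _).trans (le_trans (le_of_eq ?_) hwin)
    refine integral_congr_ae (ae_of_all _ fun t => ?_)
    simp
  rw [← hshift1]
  have hlog : 1 / ε = Real.log x := by field_simp; linarith
  have hL0 : 0 ≤ Real.log (6 * q) := Real.log_nonneg (by linarith)
  have hl0 : 0 ≤ Real.log x := Real.log_nonneg (by linarith)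
  have hfin : ‖∫ t : ℝ, K (σ + t * I) * G (σ + t * I)‖
      ≤ 2 * (12 * (1000 * √x) * 8100 * (1 / ε) * (Real.log (6 * q) + 1 / ε))
        + 24 * √x / ε * (B / ε) * Real.pi := by
    have : (∫ t : ℝ, K (σ + t * I) * G (σ + t * I))
        = 2 * (∫ t : ℝ, K (σ + t * I) * (G (σ + t * I)).re)
          - ∫ t : ℝ, K (σ + t * I) * conj (G (σ + t * I)) := by
      rw [hadd]; ring
    rw [this]
    refine (norm_sub_le _ _).trans (add_le_add ?_ hIr)
    rw [norm_mul]
    norm_num at hre ⊢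
    linarith
  refine hfin.trans ?_
  rw [show 24 * √x / ε * (B / ε) * Real.pi = 24 * √x * B * Real.pi * (1 / ε) * (1 / ε) by
    field_simp, hlog]
  have h1 : 24 * √x * B * Real.pi * Real.log x * Real.log x
      ≤ 80 * B * √x * Real.log x * (Real.log (6 * q) + Real.log x) := by
    have h2 : 0 ≤ √x * B * Real.log x * Real.log x := by positivity
    have h3 : 0 ≤ √x * B * Real.log x * Real.log (6 * q) := by positivity
    nlinarith [Real.pi_lt_d2, mul_le_mul_of_nonneg_left Real.pi_lt_d2.le h2]
  have h4 : 0 ≤ √x * Real.log x * (Real.log (6 * q) + Real.log x) := by positivity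
  nlinarith

end CharacterSum

section CharacterEstimate

open Complex MeasureTheory Set Filter Topology
open scoped ArithmeticFunction.vonMangoldt

lemma exists_norm_sum_twist_trapezoid_sub_le : ∃ C : ℝ, 0 < C ∧
    ∀ (q : ℕ) [NeZero q] (χ : DirichletCharacter ℂ q),
      (∀ s : ℂ, 0 < s.re → regL χ s = 0 → s.re = 1 / 2) →
      ∀ x y : ℝ, 8 ≤ x → 1 ≤ y → y + √x ≤ 2 * x →
        ∃ S : ℂ, HasSum (fun n : ℕ => (χ n * (Λ n * trapezoid y (√x) n : ℝ) : ℂ)) S ∧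
          ‖S - poleOrder χ * ((y - 1 + √x / 2 : ℝ) : ℂ)‖
            ≤ C * (√x * Real.log x * (Real.log (6 * q) + Real.log x)) := by
  obtain ⟨B, hB0, hB⟩ := exists_tsum_vonMangoldt_le
  refine ⟨2 * 10 ^ 8 + 80 * (B + 1), by positivity, fun q _ χ hχ x y hx hy hyx => ?_⟩
  have hlog : 0 < Real.log x := Real.log_pos (by linarith)
  have hε : (1 / Real.log x) * Real.log x = 1 := by field_simp
  set ε := 1 / Real.log x
  obtain ⟨hε0, hε1, -⟩ := eps_bounds hx hε
  obtain ⟨hs, hle⟩ := hB ε hε0 (by linarith)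
  have hG : ∀ s : ℂ, s.re = 1 + ε → ‖logDeriv (regL χ) s‖ ≤ (B + 1) / ε :=
    fun s => norm_logDeriv_regL_le_of_one_lt χ hε0 hs hle
  refine ⟨_, hasSum_twist_vonMangoldt_trapezoid (c := 1 + ε) hχ (by linarith) hy
    (Real.sqrt_pos.mpr (by linarith)) hs fun t => hG _ (by simp), ?_⟩
  have h1 := norm_integral_diffKernel_mul_logDeriv_le hχ hx hε (by linarith) hyx
    (by linarith : 0 < B + 1) hG
  rw [add_sub_cancel_right, norm_neg, norm_mul]
  have h2 : ‖(1 / (2 * Real.pi) : ℂ)‖ ≤ 1 := by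
    rw [norm_div, norm_mul, norm_real, Real.norm_of_nonneg Real.pi_pos.le]
    have := Real.pi_gt_three
    rw [norm_one, Complex.norm_ofNat, div_le_one (by positivity)]
    linarith
  refine (mul_le_mul h2 h1 (norm_nonneg _) zero_le_one).trans (le_of_eq ?_)
  ring

end CharacterEstimate

section Progression

open Complex MeasureTheory Set Filter Topology
open scoped ArithmeticFunction.vonMangoldt
open ArithmeticFunction.vonMangoldt (residueClass residueClass_apply residueClass_nonneg
  residueClass_le)

lemma trapezoid_of_le {y h u : ℝ} (hh : 0 < h) (hu : u ≤ y) : trapezoid y h u = 1 := by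
  rw [trapezoid, max_eq_left (by linarith), max_eq_left (by linarith)]
  field_simp
  ring

lemma trapezoid_of_ge {y h u : ℝ} (hh : 0 < h) (hu : y + h ≤ u) : trapezoid y h u = 0 := by
  rw [trapezoid, max_eq_right (by linarith), max_eq_right (by linarith)]
  simp

lemma trapezoid_nonneg {y h : ℝ} (hh : 0 < h) (u : ℝ) : 0 ≤ trapezoid y h u :=
  div_nonneg (sub_nonneg.mpr (max_le_max (by linarith) le_rfl)) hh.le

lemma trapezoid_le_one {y h : ℝ} (hh : 0 < h) (u : ℝ) : trapezoid y h u ≤ 1 := by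
  rw [trapezoid, div_le_one hh, sub_le_iff_le_add]
  refine max_le ?_ (by positivity)
  linarith [le_max_left (y - u) 0]

variable {q : ℕ}

/-- The Chebyshev function `ψ` of a residue class. -/
noncomputable def psiMod (a : ZMod q) (t : ℝ) : ℝ := ∑ n ∈ Finset.Icc 0 ⌊t⌋₊, residueClass a n

lemma psiMod_nonneg (a : ZMod q) (t : ℝ) : 0 ≤ psiMod a t :=
  Finset.sum_nonneg fun n _ => residueClass_nonneg a n

lemma psiMod_le_psi (a : ZMod q) (t : ℝ) : psiMod a t ≤ Chebyshev.psi t := by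
  rw [Chebyshev.psi_eq_sum_Icc]
  exact Finset.sum_le_sum fun n _ => residueClass_le a n

lemma psiMod_le_of_hasSum {a : ZMod q} {y h W : ℝ} (hy : 0 ≤ y) (hh : 0 < h)
    (hW : HasSum (fun n : ℕ => residueClass a n * trapezoid y h n) W) : psiMod a y ≤ W := by
  refine le_trans (Finset.sum_le_sum fun n hn => ?_)
    (sum_le_hasSum (Finset.Icc 0 ⌊y⌋₊)
      (fun n _ => mul_nonneg (residueClass_nonneg a n) (trapezoid_nonneg hh n)) hW)
  rw [trapezoid_of_le hh, mul_one]
  exact (Nat.le_floor_iff hy).mp (Finset.mem_Icc.mp hn).2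

lemma le_psiMod_of_hasSum {a : ZMod q} {y h W : ℝ} (hh : 0 < h)
    (hW : HasSum (fun n : ℕ => residueClass a n * trapezoid y h n) W) : W ≤ psiMod a (y + h) := by
  have h1 : HasSum (fun n : ℕ => residueClass a n * trapezoid y h n)
      (∑ n ∈ Finset.Icc 0 ⌊y + h⌋₊, residueClass a n * trapezoid y h n) := by
    refine hasSum_sum_of_ne_finset_zero fun n hn => ?_
    rw [trapezoid_of_ge hh, mul_zero]
    by_contra! hlt
    exact hn (Finset.mem_Icc.mpr ⟨n.zero_le, Nat.le_floor hlt.le⟩)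
  rw [hW.unique h1]
  exact Finset.sum_le_sum fun n _ =>
    mul_le_of_le_one_right (residueClass_nonneg a n) (trapezoid_le_one hh n)

lemma hasSum_residueClass_trapezoid [NeZero q] {a : ZMod q} (ha : IsUnit a) {x y R : ℝ}
    (hS : ∀ χ : DirichletCharacter ℂ q, ∃ S : ℂ,
      HasSum (fun n : ℕ => (χ n * (Λ n * trapezoid y (√x) n : ℝ) : ℂ)) S ∧
        ‖S - poleOrder χ * ((y - 1 + √x / 2 : ℝ) : ℂ)‖ ≤ R) :
    ∃ W : ℝ, HasSum (fun n : ℕ => residueClass a n * trapezoid y (√x) n) W ∧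
      |W - (y - 1 + √x / 2) / q.totient| ≤ R := by
  choose S hS hle using hS
  have hφ : 0 < (q.totient : ℝ) := by exact_mod_cast Nat.totient_pos.mpr q.pos_of_neZero
  have hφ' : (q.totient : ℂ) ≠ 0 := by exact_mod_cast hφ.ne'
  have h1 : HasSum (fun n : ℕ => ((residueClass a n * trapezoid y (√x) n : ℝ) : ℂ))
      ((q.totient : ℂ)⁻¹ * ∑ χ : DirichletCharacter ℂ q, χ a⁻¹ * S χ) := by
    refine ((hasSum_sum fun χ _ => (hS χ).mul_left (χ a⁻¹)).mul_left
      (q.totient : ℂ)⁻¹).congr_fun fun n => ?_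
    rw [ofReal_mul, residueClass_apply ha, mul_assoc, Finset.sum_mul]
    congr 1
    refine Finset.sum_congr rfl fun χ _ => ?_
    push_cast
    ring
  set V := (q.totient : ℂ)⁻¹ * ∑ χ : DirichletCharacter ℂ q, χ a⁻¹ * S χ with hV
  have hre := hasSum_re h1
  simp only [ofReal_re] at hre
  refine ⟨V.re, hre, ?_⟩
  have hmain : ∑ χ : DirichletCharacter ℂ q,
      χ a⁻¹ * (poleOrder χ * ((y - 1 + √x / 2 : ℝ) : ℂ)) = ((y - 1 + √x / 2 : ℝ) : ℂ) := by
    rw [Finset.sum_eq_single 1]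
    · have h2 : IsUnit (a⁻¹ : ZMod q) := by
        obtain ⟨u, rfl⟩ := ha
        rw [ZMod.inv_coe_unit]
        exact Units.isUnit _
      rw [MulChar.one_apply h2, poleOrder, if_pos rfl]
      simp
    · intro χ _ hχ
      simp [poleOrder, hχ]
    · simp
  have h3 : V - (((y - 1 + √x / 2) / q.totient : ℝ) : ℂ) = (q.totient : ℂ)⁻¹ *
      ∑ χ : DirichletCharacter ℂ q,
        χ a⁻¹ * (S χ - poleOrder χ * ((y - 1 + √x / 2 : ℝ) : ℂ)) := by
    simp_rw [mul_sub]
    rw [Finset.sum_sub_distrib, hmain, hV, mul_sub]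
    push_cast
    ring
  have h4 : |V.re - (y - 1 + √x / 2) / q.totient|
      ≤ ‖V - (((y - 1 + √x / 2) / q.totient : ℝ) : ℂ)‖ := by
    simpa using abs_re_le_norm (V - (((y - 1 + √x / 2) / q.totient : ℝ) : ℂ))
  refine h4.trans ?_
  rw [h3, norm_mul, norm_inv, norm_natCast, inv_mul_le_iff₀ hφ]
  have hcard : Fintype.card (DirichletCharacter ℂ q) = q.totient := by
    rw [← Nat.card_eq_fintype_card]
    exact DirichletCharacter.card_eq_totient_of_hasEnoughRootsOfUnity ℂ q
  refine (norm_sum_le_of_le (f := fun χ : DirichletCharacter ℂ q =>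
    χ a⁻¹ * (S χ - poleOrder χ * ((y - 1 + √x / 2 : ℝ) : ℂ))) (n := fun _ => R) _
      fun χ _ => ?_).trans_eq ?_
  · rw [norm_mul]
    exact (mul_le_mul (χ.norm_le_one _) (hle χ) (norm_nonneg _) zero_le_one).trans_eq (one_mul R)
  · simp [hcard]

lemma exists_abs_psiMod_sub_le (erh : ∀ (q : ℕ) [NeZero q] (χ : DirichletCharacter ℂ q) (s : ℂ),
      0 < s.re → s.re < 1 → χ.LFunction s = 0 → s.re = 1 / 2) :
    ∃ C : ℝ, 0 < C ∧ ∀ (q : ℕ) [NeZero q] (a : ZMod q), IsUnit a → ∀ t : ℝ, 2 ≤ t →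
      |psiMod a t - t / q.totient| ≤ C * (√t * Real.log t * (Real.log (6 * q) + Real.log t)) := by
  obtain ⟨C, hC, h⟩ := exists_norm_sum_twist_trapezoid_sub_le
  refine ⟨C + 200, by linarith, fun q _ a ha t ht => ?_⟩
  have hq := one_le_natCast_of_neZero q
  have hφ : 1 ≤ (q.totient : ℝ) := by exact_mod_cast Nat.totient_pos.mpr q.pos_of_neZero
  have hL : 1 ≤ Real.log (6 * q) := by
    rw [Real.le_log_iff_exp_le (by positivity)]
    linarith [Real.exp_one_lt_d9]
  have hl2 : 1 / 2 ≤ Real.log t := by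
    have := Real.log_le_log (by norm_num) ht
    linarith [Real.log_two_gt_d9]
  have hs1 : 1 ≤ √t := Real.one_le_sqrt.mpr (by linarith)
  have hquot : ∀ u : ℝ, 0 ≤ u → u / q.totient ≤ u := fun u hu => div_le_self hu hφ
  rcases lt_or_ge t 8 with ht8 | ht8
  · have h1 : psiMod a t ≤ 8 * (Real.log 4 + 4) := by
      refine (psiMod_le_psi a t).trans ((Chebyshev.psi_le_const_mul_self (by linarith)).trans ?_)
      have : 0 ≤ Real.log 4 := Real.log_nonneg (by norm_num)
      nlinarith
    have h2 : Real.log 4 ≤ 3 := by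
      linarith [Real.log_le_sub_one_of_pos (show (0 : ℝ) < 4 by norm_num)]
    have h3 := psiMod_nonneg a t
    have h4 := hquot t (by linarith)
    have h5 : 0 ≤ t / q.totient := by positivity
    have h6 : 1 / 2 ≤ √t * Real.log t * (Real.log (6 * q) + Real.log t) := by
      calc (1 / 2 : ℝ) = 1 * (1 / 2) * 1 := by norm_num
        _ ≤ _ := by gcongr; linarith
    have h7 : |psiMod a t - t / q.totient| ≤ 100 := abs_le.mpr ⟨by linarith, by linarith⟩
    nlinarith
  · set R := C * (√t * Real.log t * (Real.log (6 * q) + Real.log t)) with hR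
    have hsq : √t * √t = t := Real.mul_self_sqrt (by linarith)
    have hst : 2 ≤ √t := Real.le_sqrt_of_sq_le (by linarith)
    have hs0 : 0 < √t := by linarith
    have hreg : ∀ χ : DirichletCharacter ℂ q, ∀ s : ℂ, 0 < s.re → regL χ s = 0 → s.re = 1 / 2 :=
      fun χ s hs h0 => re_eq_half_of_regL_eq_zero (erh q) χ hs h0
    obtain ⟨W₁, hW₁, hle₁⟩ := hasSum_residueClass_trapezoid (x := t) (y := t) ha fun χ =>
      h q χ (hreg χ) t t ht8 (by linarith) (by nlinarith)
    obtain ⟨W₂, hW₂, hle₂⟩ := hasSum_residueClass_trapezoid (x := t) (y := t - √t) ha fun χ =>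
      h q χ (hreg χ) t (t - √t) ht8 (by nlinarith) (by linarith)
    have h1 := psiMod_le_of_hasSum (by linarith) hs0 hW₁
    have h2 := le_psiMod_of_hasSum hs0 hW₂
    rw [sub_add_cancel] at h2
    have h3 : (t - 1 + √t / 2) / q.totient ≤ t / q.totient + √t := by
      have := hquot (√t) hs0.le
      have : (t - 1 + √t / 2) / q.totient ≤ (t + √t) / q.totient := by gcongr <;> linarith
      rw [add_div t] at this
      linarith
    have h4 : t / q.totient - √t ≤ (t - √t - 1 + √t / 2) / q.totient := by
      have := hquot (√t) hs0.le
      have : (t - √t) / q.totient ≤ (t - √t - 1 + √t / 2) / q.totient := by gcongr; linarith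
      rw [sub_div] at this
      linarith
    have h5 : √t ≤ 200 * (√t * Real.log t * (Real.log (6 * q) + Real.log t)) := by
      have : 1 / 2 ≤ Real.log t * (Real.log (6 * q) + Real.log t) := by nlinarith
      nlinarith
    rw [abs_le] at hle₁ hle₂
    rw [add_mul, abs_le]
    constructor <;> linarith

end Progression

section PartialSummation

open MeasureTheory Set Filter Topology
open ArithmeticFunction (vonMangoldt)
open ArithmeticFunction.vonMangoldt (residueClass)

/-- The logarithm on the primes of a residue class. -/
noncomputable def primeLogMod (D a : ℕ) (k : ℕ) : ℝ :=
  if k.Prime ∧ k % D = a % D then Real.log k else 0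

/-- The Chebyshev function `θ` of a residue class. -/
noncomputable def thetaMod (D a : ℕ) (t : ℝ) : ℝ := ∑ k ∈ Finset.Icc 0 ⌊t⌋₊, primeLogMod D a k

lemma residueClass_sub_primeLogMod (D a k : ℕ) :
    0 ≤ residueClass (a : ZMod D) k - primeLogMod D a k ∧
    residueClass (a : ZMod D) k - primeLogMod D a k
      ≤ vonMangoldt k - if k.Prime then Real.log k else 0 := by
  have hiff : ((k : ℕ) : ZMod D) = (a : ZMod D) ↔ k % D = a % D :=
    ZMod.natCast_eq_natCast_iff' k a D
  have h0 : 0 ≤ vonMangoldt k := ArithmeticFunction.vonMangoldt_nonneg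
  simp only [residueClass, Set.indicator_apply, Set.mem_ofPred_eq, hiff, primeLogMod]
  by_cases hp : k.Prime <;> by_cases hk : k % D = a % D <;>
    simp [hp, hk, ArithmeticFunction.vonMangoldt_apply_prime, h0]

lemma abs_psiMod_sub_thetaMod_le (D a : ℕ) {t : ℝ} (ht : 1 ≤ t) :
    |psiMod (a : ZMod D) t - thetaMod D a t| ≤ 2 * √t * Real.log t := by
  rw [psiMod, thetaMod, ← Finset.sum_sub_distrib,
    abs_of_nonneg (Finset.sum_nonneg fun k _ => (residueClass_sub_primeLogMod D a k).1)]
  refine le_trans (Finset.sum_le_sum fun k _ => (residueClass_sub_primeLogMod D a k).2) ?_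
  rw [Finset.sum_sub_distrib, ← Finset.sum_filter, ← Chebyshev.psi_eq_sum_Icc,
    ← Chebyshev.theta_eq_sum_Icc]
  exact Chebyshev.psi_sub_theta_le ht

lemma primesCountMod_eq_sum (D a : ℕ) {n : ℝ} (hn : 0 ≤ n) :
    (primesCountMod n D a : ℝ) =
      ∑ k ∈ Finset.Icc 0 ⌊n⌋₊, (Real.log k)⁻¹ * primeLogMod D a k := by
  have hset : {p : ℕ | p.Prime ∧ (p : ℝ) ≤ n ∧ p % D = a % D}
      = ((Finset.Icc 0 ⌊n⌋₊).filter fun k => k.Prime ∧ k % D = a % D : Finset ℕ) := by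
    ext p
    simp [Nat.le_floor_iff hn]
    tauto
  rw [primesCountMod, hset, Set.ncard_coe_finset, Finset.card_filter, Nat.cast_sum]
  refine Finset.sum_congr rfl fun k _ => ?_
  unfold primeLogMod
  split_ifs with hk
  · have : Real.log k ≠ 0 := (Real.log_pos (by exact_mod_cast hk.1.one_lt)).ne'
    rw [inv_mul_cancel₀ this, Nat.cast_one]
  · simp

lemma continuousOn_inv_mul_log_sq (n : ℝ) :
    ContinuousOn (fun t : ℝ => (t * Real.log t ^ 2)⁻¹) (Icc 2 n) := by
  refine ContinuousOn.inv₀ (continuousOn_id.mul (ContinuousOn.pow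
    (Real.continuousOn_log.mono fun t ht => ?_) 2)) fun t ht => ?_
  · have := ht.1; simp; linarith
  · have := ht.1
    have : 0 < Real.log t := Real.log_pos (by linarith)
    positivity

lemma hasDerivAt_inv_log {t : ℝ} (ht : 2 ≤ t) :
    HasDerivAt (fun u => (Real.log u)⁻¹) (-(t * Real.log t ^ 2)⁻¹) t := by
  have h : 0 < Real.log t := Real.log_pos (by linarith)
  refine ((Real.hasDerivAt_log (by linarith : t ≠ 0)).inv h.ne').congr_deriv ?_
  field_simp

lemma primesCountMod_eq_integral (D a : ℕ) {n : ℝ} (hn : 2 ≤ n) :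
    (primesCountMod n D a : ℝ) = (Real.log n)⁻¹ * thetaMod D a n
      + ∫ t in (2 : ℝ)..n, (t * Real.log t ^ 2)⁻¹ * thetaMod D a t := by
  have hd : ∀ t ∈ Icc 2 n, deriv (fun u => (Real.log u)⁻¹) t = -(t * Real.log t ^ 2)⁻¹ :=
    fun t ht => (hasDerivAt_inv_log ht.1).deriv
  rw [primesCountMod_eq_sum D a (by linarith),
    sum_mul_eq_sub_integral_mul₁ (f := fun u => (Real.log u)⁻¹) (c := primeLogMod D a)
      (by simp [primeLogMod]) (by simp [primeLogMod]) n
      (fun t ht => (hasDerivAt_inv_log ht.1).differentiableAt)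
      (((continuousOn_inv_mul_log_sq n).neg.congr hd).integrableOn_compact isCompact_Icc),
    sub_eq_add_neg, ← integral_neg, intervalIntegral.integral_of_le hn]
  congr 1
  refine setIntegral_congr_fun measurableSet_Ioc fun t ht => ?_
  rw [hd t (Ioc_subset_Icc_self ht), neg_mul, neg_neg, thetaMod]

lemma continuousOn_inv_log_pow (n : ℝ) (k : ℕ) :
    ContinuousOn (fun t : ℝ => (Real.log t ^ k)⁻¹) (Icc 2 n) := by
  refine ContinuousOn.inv₀ (ContinuousOn.pow
    (Real.continuousOn_log.mono fun t ht => ?_) k) fun t ht => ?_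
  · have := ht.1; simp; linarith
  · have := ht.1
    have : 0 < Real.log t := Real.log_pos (by linarith)
    positivity

lemma li_eq_integral {n : ℝ} (hn : 2 ≤ n) :
    li n = n / Real.log n - 2 / Real.log 2
      + ∫ t in (2 : ℝ)..n, (t * Real.log t ^ 2)⁻¹ * t := by
  have hu : uIcc 2 n = Icc 2 n := uIcc_of_le hn
  have hi1 : IntervalIntegrable (fun t : ℝ => 1 / Real.log t) volume 2 n := by
    refine ContinuousOn.intervalIntegrable ?_
    rw [hu]
    simpa using continuousOn_inv_log_pow n 1
  have hi2 : IntervalIntegrable (fun t : ℝ => (t * Real.log t ^ 2)⁻¹ * t) volume 2 n := by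
    refine ContinuousOn.intervalIntegrable ?_
    rw [hu]
    exact (continuousOn_inv_mul_log_sq n).mul continuousOn_id
  have h := intervalIntegral.integral_eq_sub_of_hasDerivAt (f := fun t => t / Real.log t)
    (f' := fun t => 1 / Real.log t - (t * Real.log t ^ 2)⁻¹ * t) (a := 2) (b := n)
    (fun t ht => ?_) (hi1.sub hi2)
  · rw [intervalIntegral.integral_sub hi1 hi2] at h
    rw [li]
    linarith
  · rw [hu] at ht
    have h2 : 0 < t := by linarith [ht.1]
    have h3 : 0 < Real.log t := Real.log_pos (by linarith [ht.1])
    refine ((hasDerivAt_id t).div (Real.hasDerivAt_log h2.ne') h3.ne').congr_deriv ?_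
    simp only [id]
    field_simp

lemma measurable_thetaMod (D a : ℕ) : Measurable (thetaMod D a) :=
  (measurable_from_nat (f := fun m => ∑ k ∈ Finset.Icc 0 m, primeLogMod D a k)).comp
    Nat.measurable_floor

lemma abs_primesCountMod_sub_li_le {D a : ℕ} {n E : ℝ} (hn : 2 ≤ n) (hD : 1 ≤ D)
    (hE : ∀ t ∈ Icc 2 n, |thetaMod D a t - t / D.totient| ≤ E * (√t * Real.log t)) :
    |(primesCountMod n D a : ℝ) - li n / D.totient| ≤ 5 * E * √n + 4 := by
  have hφ : 1 ≤ (D.totient : ℝ) := by exact_mod_cast Nat.totient_pos.mpr hD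
  have hlog2 : 1 / 2 ≤ Real.log 2 := by linarith [Real.log_two_gt_d9]
  have hlog : ∀ t : ℝ, 2 ≤ t → 1 / 2 ≤ Real.log t := fun t ht =>
    hlog2.trans (Real.log_le_log (by norm_num) ht)
  have hE0 : 0 ≤ E := by
    have h := (abs_nonneg _).trans (hE 2 ⟨le_rfl, hn⟩)
    exact nonneg_of_mul_nonneg_left h (by positivity)
  set w : ℝ → ℝ := fun t => (t * Real.log t ^ 2)⁻¹ with hw
  have hbound : ∀ t ∈ Ioc 2 n, ‖w t * (thetaMod D a t - t / D.totient)‖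
      ≤ 2 * E * t ^ (-(1 / 2) : ℝ) := by
    intro t ht
    have ht0 : 0 < t := by linarith [ht.1]
    have hl := hlog t ht.1.le
    have hw0 : 0 < w t := by simp only [hw]; positivity
    rw [norm_mul, Real.norm_of_nonneg hw0.le, Real.norm_eq_abs]
    have hs : 0 < √t := Real.sqrt_pos.mpr ht0
    calc w t * |thetaMod D a t - t / D.totient| ≤ w t * (E * (√t * Real.log t)) := by
          gcongr; exact hE t (Ioc_subset_Icc_self ht)
      _ = E * (√t)⁻¹ * (Real.log t)⁻¹ := by
          simp only [hw]
          have : t = √t * √t := (Real.mul_self_sqrt ht0.le).symm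
          have hl0 : Real.log t ≠ 0 := by linarith
          rw [show (t * Real.log t ^ 2)⁻¹ = (√t * √t * Real.log t ^ 2)⁻¹ by rw [← this]]
          field_simp
      _ ≤ E * (√t)⁻¹ * 2 := by
          gcongr
          rw [inv_le_comm₀ (by linarith) (by norm_num)]
          linarith
      _ = 2 * E * t ^ (-(1 / 2) : ℝ) := by
          rw [Real.rpow_neg ht0.le, ← Real.sqrt_eq_rpow]; ring
  have hir : IntervalIntegrable (fun t : ℝ => 2 * E * t ^ (-(1 / 2) : ℝ)) volume 2 n :=
    (intervalIntegral.intervalIntegrable_rpow' (by norm_num)).const_mul _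
  have hmw : Measurable w := by fun_prop
  have hi : IntervalIntegrable (fun t => w t * (thetaMod D a t - t / D.totient)) volume 2 n := by
    refine hir.mono_fun'
      (hmw.mul ((measurable_thetaMod D a).sub (by fun_prop))).aestronglyMeasurable ?_
    rw [uIoc_of_le hn]
    exact (ae_restrict_iff' measurableSet_Ioc).mpr (ae_of_all _ hbound)
  have hi2 : IntervalIntegrable (fun t : ℝ => w t * t) volume 2 n := by
    refine ContinuousOn.intervalIntegrable ?_
    rw [uIcc_of_le hn]
    exact (continuousOn_inv_mul_log_sq n).mul continuousOn_id
  have hθ : (∫ t in (2 : ℝ)..n, w t * thetaMod D a t)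
      = (∫ t in (2 : ℝ)..n, w t * (thetaMod D a t - t / D.totient))
        + (∫ t in (2 : ℝ)..n, w t * t) / D.totient := by
    rw [← intervalIntegral.integral_div, ← intervalIntegral.integral_add hi (hi2.div_const _)]
    refine intervalIntegral.integral_congr fun t _ => ?_
    ring
  have hI : |∫ t in (2 : ℝ)..n, w t * (thetaMod D a t - t / D.totient)| ≤ 4 * E * √n := by
    refine (intervalIntegral.norm_integral_le_of_norm_le hn (ae_of_all _ hbound) hir).trans ?_
    rw [intervalIntegral.integral_const_mul, integral_rpow (Or.inl (by norm_num))]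
    norm_num
    rw [← Real.sqrt_eq_rpow, ← Real.sqrt_eq_rpow]
    nlinarith [Real.sqrt_nonneg 2, Real.sqrt_nonneg n, mul_nonneg hE0 (Real.sqrt_nonneg 2)]
  have hln := hlog n hn
  have hB : |(Real.log n)⁻¹ * (thetaMod D a n - n / D.totient)| ≤ E * √n := by
    rw [abs_mul, abs_of_pos (by positivity), inv_mul_le_iff₀ (by positivity)]
    linarith [hE n ⟨hn, le_rfl⟩]
  have h2 : |2 / Real.log 2 / D.totient| ≤ 4 := by
    rw [abs_of_nonneg (by positivity)]
    refine (div_le_self (by positivity) hφ).trans ?_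
    rw [div_le_iff₀ (by positivity)]
    linarith
  have key : (primesCountMod n D a : ℝ) - li n / D.totient
      = (Real.log n)⁻¹ * (thetaMod D a n - n / D.totient)
        + (∫ t in (2 : ℝ)..n, w t * (thetaMod D a t - t / D.totient))
        + 2 / Real.log 2 / D.totient := by
    rw [primesCountMod_eq_integral D a hn, li_eq_integral hn, hθ]
    ring
  rw [key]
  refine (abs_add_three _ _ _).trans ?_
  linarith

end PartialSummation

/-- Under ERH, the strong form of the prime number theorem in arithmetic progressions:
`|π(n, D, a) - li(n)/φ(D)| ≤ C √n log n` with an absolute constant `C`. -/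
theorem pnt_progressions_of_ERH (erh : ExtendedRiemannHypothesis) :
    ∃ C : ℝ, ∀ n : ℝ, 2 ≤ n → ∀ D : ℕ, 1 ≤ D → (D : ℝ) < n →
      ∀ a : ℕ, Nat.Coprime a D →
        |(primesCountMod n D a : ℝ) - li n / (Nat.totient D : ℝ)|
          ≤ C * Real.sqrt n * Real.log n := by
  obtain ⟨C, hC, h⟩ := exists_abs_psiMod_sub_le erh
  refine ⟨5 * (5 * C + 4) + 8, fun n hn D hD hDn a ha => ?_⟩
  have : NeZero D := ⟨by omega⟩
  have hlog : ∀ t : ℝ, 2 ≤ t → 1 / 2 ≤ Real.log t := fun t ht => by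
    linarith [Real.log_le_log (by norm_num) ht, Real.log_two_gt_d9]
  have hln := hlog n hn
  have hsn : 1 ≤ √n := Real.one_le_sqrt.mpr (by linarith)
  have hD0 : (1 : ℝ) ≤ D := by exact_mod_cast hD
  refine (abs_primesCountMod_sub_li_le (E := (5 * C + 4) * Real.log n) hn hD
    fun t ht => ?_).trans ?_
  · have h1 := h D (a : ZMod D) ((ZMod.isUnit_iff_coprime a D).mpr ha) t ht.1
    have h2 := abs_psiMod_sub_thetaMod_le D a (by linarith [ht.1] : 1 ≤ t)
    rw [abs_sub_comm] at h2
    have h3 := abs_sub_le (thetaMod D a t) (psiMod (a : ZMod D) t) (t / D.totient)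
    have hlt := hlog t ht.1
    have h4 : Real.log (6 * D) + Real.log t ≤ 5 * Real.log n := by
      have e1 : Real.log (6 * D) ≤ 4 * Real.log n := by
        rw [show 4 * Real.log n = Real.log (n ^ 4) by rw [Real.log_pow]; norm_num]
        refine Real.log_le_log (by positivity) ?_
        nlinarith [pow_le_pow_left₀ (by norm_num) hn 3, pow_succ n 3]
      have e2 := Real.log_le_log (by linarith [ht.1]) ht.2
      linarith
    have h5 : 0 ≤ √t * Real.log t := by positivity
    have h6 : C * (√t * Real.log t * (Real.log (6 * D) + Real.log t))
        ≤ C * (√t * Real.log t * (5 * Real.log n)) := by gcongr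
    nlinarith [mul_le_mul_of_nonneg_left hln h5]
  · nlinarith
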